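/- arXiv:1408.6775 — 2 statements merged into one kernel-verified Lean document; each statement's English description precedes it below -/
import Mathlib

section
/- (Proposition 2.1) Let γ ≥ 3 and let the initial data (τ₀,u₀) satisfy Assumption A. If there exists a point x* ∈ ℝ such that s_x(x*,0) < 0 or r_x(x*,0) < 0, then the classical solution of the Cauchy problem for the p-system breaks down in finite time: there is no C¹ solution of the p-system on all of ℝ × [0,∞) with initial data (τ₀,u₀). -/
open Real Set MeasureTheory Filter

/-- `η(τ) = (2√(K₁γ)/(γ−1)) τ^{−(γ−1)/2}`. -/
noncomputable def etaP (K₁ γ τv : ℝ) : ℝ :=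
  2 * Real.sqrt (K₁ * γ) / (γ - 1) * τv ^ (-(γ - 1) / 2)

/-- Lagrangian sound speed `c(τ) = √(K₁γ) τ^{−(γ+1)/2}`. -/
noncomputable def soundP (K₁ γ τv : ℝ) : ℝ :=
  Real.sqrt (K₁ * γ) * τv ^ (-(γ + 1) / 2)

/-- `K_τ = (2√(K₁γ)/(γ−1))^{2/(γ−1)}`. -/
noncomputable def KtauP (K₁ γ : ℝ) : ℝ :=
  (2 * Real.sqrt (K₁ * γ) / (γ - 1)) ^ (2 / (γ - 1))

/-- `K_c = √(K₁γ) K_τ^{−(γ+1)/2}`. -/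
noncomputable def KcP (K₁ γ : ℝ) : ℝ :=
  Real.sqrt (K₁ * γ) * KtauP K₁ γ ^ (-(γ + 1) / 2)

/-- A `Cᵏ` solution `(τ, u)` of the p-system with `γ`-law pressure `p = K₁ τ^{−γ}`
on `ℝ × I`:  `τ > 0`, both components are `Cᵏ`, and the equations
`τ_t − u_x = 0`, `u_t + (p(τ))_x = 0` hold pointwise. -/
def PSysSol (K₁ γ : ℝ) (I : Set ℝ) (k : ℕ) (τ u : ℝ → ℝ → ℝ) : Prop :=
  (∀ x t, t ∈ I → 0 < τ x t) ∧
  ContDiffOn ℝ k (fun p : ℝ × ℝ => τ p.1 p.2) (Set.univ ×ˢ I) ∧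
  ContDiffOn ℝ k (fun p : ℝ × ℝ => u p.1 p.2) (Set.univ ×ˢ I) ∧
  (∀ x : ℝ, ∀ t ∈ I, deriv (fun t' => τ x t') t - deriv (fun x' => u x' t) x = 0) ∧
  (∀ x : ℝ, ∀ t ∈ I, deriv (fun t' => u x t') t + deriv (fun x' => K₁ * τ x' t ^ (-γ)) x = 0)

/-- Assumption A: `τ₀, u₀` are `C¹` with `‖τ₀‖_{C¹} + ‖u₀‖_{C¹} ≤ M₁` and `τ₀ ≥ M₂ > 0`. -/
def AssumptionA (M₁ M₂ : ℝ) (τ₀ u₀ : ℝ → ℝ) : Prop :=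
  ContDiff ℝ 1 τ₀ ∧ ContDiff ℝ 1 u₀ ∧ 0 < M₁ ∧ 0 < M₂ ∧
  (∀ x, |τ₀ x| + |deriv τ₀ x| + |u₀ x| + |deriv u₀ x| ≤ M₁) ∧
  (∀ x, M₂ ≤ τ₀ x)

/-! ### Calculus on the half plane -/

/-- The closed upper half plane. -/
def SH : Set (ℝ × ℝ) := (Set.univ : Set ℝ) ×ˢ Set.Ici (0:ℝ)

/-- `C¹` on the closed half plane. -/
def C1 (f : ℝ → ℝ → ℝ) : Prop := ContDiffOn ℝ 1 (fun p : ℝ × ℝ => f p.1 p.2) SH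

noncomputable def px (f : ℝ → ℝ → ℝ) (x t : ℝ) : ℝ :=
  fderivWithin ℝ (fun p : ℝ × ℝ => f p.1 p.2) SH (x, t) (1, 0)

noncomputable def pt (f : ℝ → ℝ → ℝ) (x t : ℝ) : ℝ :=
  fderivWithin ℝ (fun p : ℝ × ℝ => f p.1 p.2) SH (x, t) (0, 1)

lemma mem_SH {x t : ℝ} (ht : 0 ≤ t) : (x, t) ∈ SH := ⟨trivial, ht⟩

lemma SH_ud : UniqueDiffOn ℝ SH := uniqueDiffOn_univ.prod (uniqueDiffOn_Ici 0)

lemma SH_nhds {x t : ℝ} (ht : 0 < t) : SH ∈ nhds (x, t) :=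
  prod_mem_nhds univ_mem (Ici_mem_nhds ht)

lemma C1.hasF {f : ℝ → ℝ → ℝ} (hf : C1 f) {p : ℝ × ℝ} (hp : p ∈ SH) :
    HasFDerivWithinAt (fun p : ℝ × ℝ => f p.1 p.2)
      (fderivWithin ℝ (fun p : ℝ × ℝ => f p.1 p.2) SH p) SH p :=
  ((hf.differentiableOn (by norm_num)) p hp).hasFDerivWithinAt

lemma C1.cont {f : ℝ → ℝ → ℝ} (hf : C1 f) : ContinuousOn (fun p : ℝ × ℝ => f p.1 p.2) SH :=
  hf.continuousOn

lemma C1.contF {f : ℝ → ℝ → ℝ} (hf : C1 f) :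
    ContinuousOn (fderivWithin ℝ (fun p : ℝ × ℝ => f p.1 p.2) SH) SH :=
  hf.continuousOn_fderivWithin SH_ud le_rfl

lemma C1.contx {f : ℝ → ℝ → ℝ} (hf : C1 f) :
    ContinuousOn (fun p : ℝ × ℝ => px f p.1 p.2) SH :=
  hf.contF.clm_apply continuousOn_const

lemma C1.hasx {f : ℝ → ℝ → ℝ} (hf : C1 f) {x t : ℝ} (ht : 0 ≤ t) :
    HasDerivAt (fun x => f x t) (px f x t) x := by
  have h1 := hf.hasF (mem_SH (x := x) ht)
  have h2 : HasDerivWithinAt (fun y : ℝ => (y, t)) ((1:ℝ), (0:ℝ)) univ x :=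
    ((hasDerivAt_id x).prodMk (hasDerivAt_const x t)).hasDerivWithinAt
  have := h1.comp_hasDerivWithinAt x h2 (fun y _ => mem_SH ht)
  exact hasDerivWithinAt_univ.1 this

lemma C1.hasc {f : ℝ → ℝ → ℝ} (hf : C1 f) {X : ℝ → ℝ} {v t : ℝ} (ht : 0 < t)
    (hX : HasDerivAt X v t) :
    HasDerivAt (fun t => f (X t) t) (pt f (X t) t + v * px f (X t) t) t := by
  have h1 := (hf.hasF (mem_SH (x := X t) ht.le)).hasFDerivAt (SH_nhds ht)
  have h2 : HasDerivAt (fun t : ℝ => (X t, t)) (v, (1:ℝ)) t := hX.prodMk (hasDerivAt_id t)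
  have h3 := HasFDerivAt.comp_hasDerivAt (f := fun t : ℝ => (X t, t)) t h1 h2
  have e : ((v, (1:ℝ)) : ℝ × ℝ) = (0, 1) + v • ((1:ℝ), (0:ℝ)) := by simp
  rw [e, map_add, map_smul] at h3
  exact h3

lemma C1.hast {f : ℝ → ℝ → ℝ} (hf : C1 f) {x t : ℝ} (ht : 0 < t) :
    HasDerivAt (fun t => f x t) (pt f x t) t := by
  simpa using hf.hasc ht (hasDerivAt_const t x)

lemma C1.contc {f : ℝ → ℝ → ℝ} (hf : ContinuousOn (fun p : ℝ × ℝ => f p.1 p.2) SH)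
    {X : ℝ → ℝ} {a b : ℝ} (ha : 0 ≤ a)
    (hX : ContinuousOn X (Icc a b)) : ContinuousOn (fun t => f (X t) t) (Icc a b) :=
  hf.comp (hX.prodMk continuousOn_id) (fun _ ht => mem_SH (ha.trans ht.1))

lemma C1.neg {f : ℝ → ℝ → ℝ} (hf : C1 f) : C1 (fun x t => - f x t) :=
  ContDiffOn.neg hf

/-- The box. -/
def Bx (N : ℝ) : Set (ℝ × ℝ) := Icc (-N) N ×ˢ Icc 0 N

lemma Bx_sub (N : ℝ) : Bx N ⊆ SH := fun _ hp => ⟨trivial, hp.2.1⟩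

lemma Bx_cpt (N : ℝ) : IsCompact (Bx N) := isCompact_Icc.prod isCompact_Icc

lemma C1.lip {f : ℝ → ℝ → ℝ} (hf : C1 f) (N : ℝ) :
    ∃ K : NNReal, LipschitzOnWith K (fun p : ℝ × ℝ => f p.1 p.2) (Bx N) := by
  obtain ⟨C, hC⟩ := (Bx_cpt N).exists_bound_of_continuousOn (hf.contF.mono (Bx_sub N))
  refine ⟨C.toNNReal, Convex.lipschitzOnWith_of_nnnorm_hasFDerivWithin_le
    (fun p hp => (hf.hasF (Bx_sub N hp)).mono (Bx_sub N)) (fun p hp => ?_)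
    ((convex_Icc _ _).prod (convex_Icc _ _))⟩
  rw [← NNReal.coe_le_coe, coe_nnnorm]
  exact (hC p hp).trans (Real.le_coe_toNNReal C)

/-! ### Clipped ODE -/

noncomputable def clip (N : ℝ) (f : ℝ → ℝ → ℝ) (t x : ℝ) : ℝ :=
  f (max (-N) (min x N)) (max 0 (min t N))

lemma clip_eq {N : ℝ} {f : ℝ → ℝ → ℝ} {t x : ℝ} (h1 : -N ≤ x) (h2 : x ≤ N) (h3 : 0 ≤ t)
    (h4 : t ≤ N) : clip N f t x = f x t := by
  unfold clip
  rw [min_eq_left h2, min_eq_left h4, max_eq_right h1, max_eq_right h3]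

lemma clip_mem {N : ℝ} (hN : 0 < N) (t x : ℝ) :
    ((max (-N) (min x N)), (max 0 (min t N))) ∈ Bx N :=
  ⟨⟨le_max_left _ _, max_le (by linarith) (min_le_right _ _)⟩,
    ⟨le_max_left _ _, max_le (by linarith) (min_le_right _ _)⟩⟩

lemma clip_lip {f : ℝ → ℝ → ℝ} (hf : C1 f) {N : ℝ} (hN : 0 < N) :
    ∃ K : NNReal, ∀ t, LipschitzWith K (clip N f t) := by
  obtain ⟨K, hK⟩ := hf.lip N
  refine ⟨K, fun t => LipschitzWith.of_dist_le_mul fun x y => ?_⟩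
  refine (hK.dist_le_mul _ (clip_mem hN t x) _ (clip_mem hN t y)).trans ?_
  gcongr
  rw [Prod.dist_eq]
  simp only [dist_self]
  refine max_le ?_ dist_nonneg
  rw [Real.dist_eq, Real.dist_eq]
  have h1 := abs_max_sub_max_le_max (-N) (min x N) (-N) (min y N)
  have h2 := abs_min_sub_min_le_max x N y N
  simp only [sub_self, abs_zero] at h1 h2
  rw [max_eq_left (abs_nonneg _)] at h2
  rw [max_eq_right (a := (0:ℝ)) (abs_nonneg _)] at h1
  exact h1.trans h2

lemma clip_cont {f : ℝ → ℝ → ℝ} (hf : C1 f) {N : ℝ} (hN : 0 < N) (x : ℝ) :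
    Continuous (fun t => clip N f t x) := by
  have := (hf.cont.mono (Bx_sub N)).comp_continuous
    (f := fun t => ((max (-N) (min x N)), (max 0 (min t N)))) (by fun_prop)
    (fun t => clip_mem hN t x)
  exact this

lemma clip_bdd {f : ℝ → ℝ → ℝ} (hf : C1 f) {N : ℝ} (hN : 0 < N) :
    ∃ L : NNReal, ∀ t x, ‖clip N f t x‖ ≤ L := by
  obtain ⟨C, hC⟩ := (Bx_cpt N).exists_bound_of_continuousOn (hf.cont.mono (Bx_sub N))
  exact ⟨C.toNNReal, fun t x => (hC _ (clip_mem hN t x)).trans (Real.le_coe_toNNReal C)⟩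

lemma clip_sol {f : ℝ → ℝ → ℝ} (hf : C1 f) {N : ℝ} (hN : 0 < N) {t₀ : ℝ}
    (ht : t₀ ∈ Icc 0 N) (x₀ : ℝ) :
    ∃ X : ℝ → ℝ, X t₀ = x₀ ∧ ∀ t ∈ Icc 0 N, HasDerivAt X (clip N f t (X t)) t := by
  obtain ⟨K, hK⟩ := clip_lip hf hN
  obtain ⟨L, hL⟩ := clip_bdd hf hN
  have hP : IsPicardLindelof (clip N f) (tmin := -1) (tmax := N + 1)
      ⟨t₀, by constructor <;> linarith [ht.1, ht.2]⟩ x₀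
      (L * (N + 2).toNNReal) 0 L K :=
    { lipschitzOnWith := fun t _ => (hK t).lipschitzOnWith
      continuousOn := fun x _ => (clip_cont hf hN x).continuousOn
      norm_le := fun t _ x _ => hL t x
      mul_max_le := by
        have : ((N + 2).toNNReal : ℝ) = N + 2 := Real.coe_toNNReal _ (by linarith)
        simp only [NNReal.coe_mul, this, NNReal.coe_zero, sub_zero]
        gcongr
        apply max_le <;> linarith [ht.1, ht.2] }
  obtain ⟨X, h1, h2⟩ := hP.exists_eq_forall_mem_Icc_hasDerivWithinAt₀
  refine ⟨X, h1, fun t h => (h2 t ?_).hasDerivAt (Icc_mem_nhds ?_ ?_)⟩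
  · constructor <;> linarith [h.1, h.2]
  · linarith [h.1]
  · linarith [h.2]

/-- Backward comparison. -/
lemma clip_cmp {f : ℝ → ℝ → ℝ} (hf : C1 f) {N : ℝ} (hN : 0 < N) {X Y : ℝ → ℝ} {T : ℝ}
    (hX : ∀ t ∈ Icc 0 T, HasDerivAt X (clip N f t (X t)) t)
    (hY : ∀ t ∈ Icc 0 T, HasDerivAt Y (clip N f t (Y t)) t)
    (h : X T ≤ Y T) : ∀ t ∈ Icc 0 T, X t ≤ Y t := by
  obtain ⟨K, hK⟩ := clip_lip hf hN
  have cX : ContinuousOn X (Icc 0 T) := HasDerivAt.continuousOn hX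
  have cY : ContinuousOn Y (Icc 0 T) := HasDerivAt.continuousOn hY
  intro t ht
  by_contra hlt
  push Not at hlt
  have hsub : Icc t T ⊆ Icc 0 T := Icc_subset_Icc_left ht.1
  have hc : ContinuousOn (fun t => Y t - X t) (Icc t T) := (cY.sub cX).mono hsub
  obtain ⟨t', ht', he⟩ := intermediate_value_Icc ht.2 hc
    (show (0:ℝ) ∈ Icc _ _ from ⟨by linarith, by linarith⟩)
  have hsub' : Icc t t' ⊆ Icc 0 T := Icc_subset_Icc ht.1 ht'.2
  have := ODE_solution_unique_of_mem_Icc_left (v := clip N f) (s := fun _ => univ) (K := K)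
    (f := X) (g := Y) (a := t) (b := t')
    (fun t _ => (hK t).lipschitzOnWith) (cX.mono hsub')
    (fun s hs => (hX s (hsub' (Ioc_subset_Icc_self hs))).hasDerivWithinAt) (fun _ _ => trivial)
    (cY.mono hsub')
    (fun s hs => (hY s (hsub' (Ioc_subset_Icc_self hs))).hasDerivWithinAt) (fun _ _ => trivial)
    (by simp only at he; linarith)
  have := this ⟨le_rfl, ht'.1⟩
  linarith

lemma const_of_deriv {F : ℝ → ℝ} {a b : ℝ} (hab : a ≤ b) (hc : ContinuousOn F (Icc a b))
    (hd : ∀ t ∈ Ioo a b, HasDerivAt F 0 t) : F b = F a := by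
  rcases hab.eq_or_lt with rfl | h
  · rfl
  obtain ⟨c, _, hc⟩ := exists_hasDerivAt_eq_slope F (fun _ => 0) h hc hd
  have : b - a ≠ 0 := by linarith
  field_simp at hc
  linarith

lemma le_of_deriv {F F' : ℝ → ℝ} {a b C : ℝ} (hab : a ≤ b) (hc : ContinuousOn F (Icc a b))
    (hd : ∀ t ∈ Ioo a b, HasDerivAt F (F' t) t) (hC : ∀ t ∈ Ioo a b, F' t ≤ C) :
    F b - F a ≤ C * (b - a) := by
  rcases hab.eq_or_lt with rfl | h
  · simp
  obtain ⟨c, h1, h2⟩ := exists_hasDerivAt_eq_slope F F' h hc hd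
  have := hC c h1
  rw [h2, div_le_iff₀ (by linarith)] at this
  exact this

/-- No exit, forward. -/
lemma no_exit {Z : ℝ → ℝ} {a b N : ℝ} (hc : ContinuousOn Z (Icc a b))
    (h : ∀ t ∈ Icc a b, (∀ t' ∈ Icc a t, Z t' ≤ N) → Z t < N) (ha : Z a < N) :
    ∀ t ∈ Icc a b, Z t ≤ N := by
  intro t ht
  by_contra hlt
  push Not at hlt
  have hsub : Icc a t ⊆ Icc a b := Icc_subset_Icc_right ht.2
  have hcpt : IsCompact (Icc a t ∩ Z ⁻¹' (Ici N)) :=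
    isCompact_Icc.of_isClosed_subset ((hc.mono hsub).preimage_isClosed_of_isClosed isClosed_Icc
      isClosed_Ici) inter_subset_left
  obtain ⟨m, hm, hmin⟩ := hcpt.exists_isLeast ⟨t, ⟨ht.1, le_rfl⟩, hlt.le⟩
  have hlt' : ∀ t' ∈ Icc a m, t' ≠ m → Z t' < N := by
    intro t' h' hne
    by_contra hh
    push Not at hh
    have := hmin ⟨⟨h'.1, h'.2.trans hm.1.2⟩, hh⟩
    exact hne (le_antisymm h'.2 this)
  have ham : a < m := by
    rcases hm.1.1.eq_or_lt with e | e
    · exact absurd hm.2 (by rw [← e]; simpa using ha)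
    · exact e
  have hZm : Z m ≤ N := by
    have h1 : Tendsto Z (nhdsWithin m (Ioo a m)) (nhds (Z m)) :=
      ((hc m (hsub hm.1)).mono (fun s hs => ⟨hs.1.le, hs.2.le.trans (hm.1.2.trans ht.2)⟩))
    have : (nhdsWithin m (Ioo a m)).NeBot := by
      rw [← mem_closure_iff_nhdsWithin_neBot, closure_Ioo ham.ne]
      exact ⟨ham.le, le_rfl⟩
    refine le_of_tendsto h1 ?_
    filter_upwards [self_mem_nhdsWithin] with s hs
    exact (hlt' s ⟨hs.1.le, hs.2.le⟩ hs.2.ne).le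
  have h1 := h m (hsub hm.1) (fun t' h' => by
    by_cases e : t' = m
    · rw [e]; exact hZm
    · exact (hlt' t' h' e).le)
  exact absurd hm.2 (by simpa using h1)

/-- No exit, backward. -/
lemma no_exit_back {Z : ℝ → ℝ} {a b N : ℝ} (hc : ContinuousOn Z (Icc a b))
    (h : ∀ t ∈ Icc a b, (∀ t' ∈ Icc t b, Z t' ≤ N) → Z t < N) (hb : Z b < N) :
    ∀ t ∈ Icc a b, Z t ≤ N := by
  have := no_exit (Z := fun t => Z (-t)) (a := -b) (b := -a) (N := N)
    (hc.comp continuousOn_neg (fun t ht => ⟨by linarith [ht.2], by linarith [ht.1]⟩))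
    (fun t ht hh => h (-t) ⟨by linarith [ht.2], by linarith [ht.1]⟩ (fun t' ht' => by
      simpa using hh (-t') ⟨by linarith [ht'.2], by linarith [ht'.1]⟩)) (by simpa using hb)
  intro t ht
  simpa using this (-t) ⟨by linarith [ht.2], by linarith [ht.1]⟩

/-! ### The abstract 2x2 system in Riemann invariants -/

structure RSys (s r c b : ℝ → ℝ → ℝ) : Prop where
  hs : C1 s
  hr : C1 r
  hc : C1 c
  cpos : ∀ x t, 0 ≤ t → 0 < c x t
  es : ∀ x t, 0 < t → pt s x t + c x t * px s x t = 0
  er : ∀ x t, 0 < t → pt r x t - c x t * px r x t = 0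
  ec : ∀ x t, 0 < t → pt c x t - c x t * px c x t = - (b x t * px s x t)
  bc : ∀ B, ∃ C, ∀ x t, 0 ≤ t → s x t - r x t ≤ B → c x t ≤ C
  ba : ∀ B, ∃ a, 0 < a ∧ ∀ x t, 0 ≤ t → s x t - r x t ≤ B → a * (c x t * √(c x t)) ≤ b x t

lemma ge_of_deriv {F F' : ℝ → ℝ} {a b C : ℝ} (hab : a ≤ b) (hc : ContinuousOn F (Icc a b))
    (hd : ∀ t ∈ Ioo a b, HasDerivAt F (F' t) t) (hC : ∀ t ∈ Ioo a b, C ≤ F' t) :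
    C * (b - a) ≤ F b - F a := by
  have := le_of_deriv (F := fun t => - F t) (F' := fun t => - F' t) (C := -C) hab hc.neg
    (fun t ht => (hd t ht).neg) (fun t ht => neg_le_neg (hC t ht))
  linarith

/-- Monotonicity along a curve with nonnegative speed. -/
lemma mono_of_deriv {F F' : ℝ → ℝ} {T : ℝ}
    (hd : ∀ t ∈ Icc 0 T, HasDerivAt F (F' t) t) (hC : ∀ t ∈ Icc 0 T, 0 ≤ F' t) {a b : ℝ}
    (ha : 0 ≤ a) (hab : a ≤ b) (hb : b ≤ T) : F a ≤ F b := by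
  have hm : ∀ t ∈ Icc a b, t ∈ Icc 0 T := fun t ht => ⟨ha.trans ht.1, ht.2.trans hb⟩
  have := ge_of_deriv (F := F) (F' := F') (C := 0) hab
    (HasDerivAt.continuousOn (fun t ht => hd t (hm t ht)))
    (fun t ht => hd t (hm t (Ioo_subset_Icc_self ht)))
    (fun t ht => hC t (hm t (Ioo_subset_Icc_self ht)))
  linarith

variable {s r c b : ℝ → ℝ → ℝ}

/-- `s` is constant along forward characteristics. -/
lemma RSys.s_const (h : RSys s r c b) {X : ℝ → ℝ} {t₀ T : ℝ} (h0 : 0 ≤ t₀) (hT : t₀ ≤ T)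
    (hX : ∀ t ∈ Icc t₀ T, HasDerivAt X (c (X t) t) t) : s (X T) T = s (X t₀) t₀ := by
  refine const_of_deriv (F := fun t => s (X t) t) hT
    (C1.contc h.hs.cont h0 (HasDerivAt.continuousOn hX)) (fun t ht => ?_)
  have ht0 : 0 < t := lt_of_le_of_lt h0 ht.1
  have := h.hs.hasc ht0 (hX t (Ioo_subset_Icc_self ht))
  rwa [h.es _ _ ht0] at this

lemma RSys.r_const (h : RSys s r c b) {X : ℝ → ℝ} {t₀ T : ℝ} (h0 : 0 ≤ t₀) (hT : t₀ ≤ T)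
    (hX : ∀ t ∈ Icc t₀ T, HasDerivAt X (- c (X t) t) t) : r (X T) T = r (X t₀) t₀ := by
  refine const_of_deriv (F := fun t => r (X t) t) hT
    (C1.contc h.hr.cont h0 (HasDerivAt.continuousOn hX)) (fun t ht => ?_)
  have ht0 : 0 < t := lt_of_le_of_lt h0 ht.1
  have := h.hr.hasc ht0 (hX t (Ioo_subset_Icc_self ht))
  have e := h.er (X t) _ ht0
  rwa [show pt r (X t) t + -c (X t) t * px r (X t) t = 0 by linarith] at this

lemma RSys.s_right (h : RSys s r c b) {X : ℝ → ℝ} {T B : ℝ}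
    (hX : ∀ t ∈ Icc 0 T, HasDerivAt X (c (X t) t) t) (hB : ∀ x, s x 0 ≤ B)
    {t x : ℝ} (ht : t ∈ Icc 0 T) (hx : X t ≤ x) : s x t ≤ B := by
  set N := |x| + |X 0| + t + 1 with hNdef
  have hN : 0 < N := by have := ht.1; positivity
  obtain ⟨Y, hY0, hY⟩ := clip_sol h.hc hN (t₀ := t)
    ⟨ht.1, by rw [hNdef]; linarith [abs_nonneg x, abs_nonneg (X 0)]⟩ x
  have htN : t ≤ N := by linarith [abs_nonneg x, abs_nonneg (X 0)]
  have hXm : ∀ {a b}, 0 ≤ a → a ≤ b → b ≤ T → X a ≤ X b := fun ha hab hb =>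
    mono_of_deriv hX (fun t ht => (h.cpos _ _ ht.1).le) ha hab hb
  have hYm : ∀ {a b}, 0 ≤ a → a ≤ b → b ≤ N → Y a ≤ Y b := fun ha hab hb =>
    mono_of_deriv hY (fun t ht => (h.cpos _ _ (le_max_left _ _)).le) ha hab hb
  have hX' : ∀ t' ∈ Icc 0 t, HasDerivAt X (clip N c t' (X t')) t' := by
    intro t' ht'
    rw [clip_eq]
    · exact hX t' ⟨ht'.1, ht'.2.trans ht.2⟩
    · have := hXm le_rfl ht'.1 (ht'.2.trans ht.2)
      linarith [abs_nonneg x, neg_abs_le (X 0), ht.1]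
    · have := hXm ht'.1 ht'.2 ht.2
      linarith [le_abs_self x, abs_nonneg (X 0), ht.1]
    · exact ht'.1
    · exact ht'.2.trans htN
  have hcmp := clip_cmp h.hc hN hX' (fun t' ht' => hY t' ⟨ht'.1, ht'.2.trans htN⟩)
    (by rw [hY0]; exact hx)
  have hY' : ∀ t' ∈ Icc 0 t, HasDerivAt Y (c (Y t') t') t' := by
    intro t' ht'
    have := hY t' ⟨ht'.1, ht'.2.trans htN⟩
    rwa [clip_eq] at this
    · have h1 := hXm le_rfl ht'.1 (ht'.2.trans ht.2)
      have h2 := hcmp t' ht'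
      linarith [abs_nonneg x, neg_abs_le (X 0), ht.1]
    · have h1 := hYm ht'.1 ht'.2 htN
      rw [hY0] at h1
      linarith [le_abs_self x, abs_nonneg (X 0), ht.1]
    · exact ht'.1
    · exact ht'.2.trans htN
  have := h.s_const le_rfl ht.1 hY'
  rw [hY0] at this
  rw [this]
  exact hB _

lemma RSys.r_on (h : RSys s r c b) {X : ℝ → ℝ} {T B : ℝ}
    (hX : ∀ t ∈ Icc 0 T, HasDerivAt X (c (X t) t) t) (hB : ∀ x, s x 0 ≤ B)
    (hB' : ∀ x, -B ≤ r x 0)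
    {t : ℝ} (ht : t ∈ Icc 0 T) : -B ≤ r (X t) t := by
  set x := X t with hxdef
  obtain ⟨C, hC⟩ := h.bc (B - r x t)
  set N := |x| + |C| * t + t + 1 with hNdef
  have hCt : 0 ≤ |C| * t := mul_nonneg (abs_nonneg _) ht.1
  have hN : 0 < N := by linarith [abs_nonneg x, ht.1]
  have htN : t ≤ N := by linarith [abs_nonneg x, ht.1]
  obtain ⟨Z, hZ0, hZ⟩ := clip_sol h.hc.neg hN (t₀ := t) ⟨ht.1, htN⟩ x
  have hXm : ∀ {a b}, 0 ≤ a → a ≤ b → b ≤ T → X a ≤ X b := fun ha hab hb =>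
    mono_of_deriv hX (fun t ht => (h.cpos _ _ ht.1).le) ha hab hb
  have hZm : ∀ {a b}, 0 ≤ a → a ≤ b → b ≤ N → Z b ≤ Z a := fun {a b} ha hab hb => by
    have := mono_of_deriv (F := fun t => - Z t) (fun t ht => (hZ t ht).neg)
      (fun t ht => by
        have := (h.cpos (max (-N) (min (Z t) N)) (max 0 (min t N)) (le_max_left _ _)).le
        simpa [clip] using this) ha hab hb
    linarith
  have hZx : ∀ t' ∈ Icc 0 t, x ≤ Z t' := fun t' ht' => by
    rw [← hZ0]; exact hZm ht'.1 ht'.2 htN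
  have hZd : ∀ t' ∈ Icc 0 t, Z t' ≤ N → HasDerivAt Z (- c (Z t') t') t' := by
    intro t' ht' hle
    have := hZ t' ⟨ht'.1, ht'.2.trans htN⟩
    rwa [clip_eq] at this
    · have := hZx t' ht'
      linarith [neg_abs_le x, ht.1]
    · exact hle
    · exact ht'.1
    · exact ht'.2.trans htN
  have hZc : ContinuousOn Z (Icc 0 t) :=
    HasDerivAt.continuousOn (fun t' ht' => hZ t' ⟨ht'.1, ht'.2.trans htN⟩)
  have hle : ∀ t' ∈ Icc 0 t, Z t' ≤ N := by
    refine no_exit_back hZc (fun t₁ ht₁ hh => ?_) ?_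
    · have hm : ∀ t' ∈ Icc t₁ t, t' ∈ Icc 0 t := fun t' ht' => ⟨ht₁.1.trans ht'.1, ht'.2⟩
      have hd : ∀ t' ∈ Icc t₁ t, HasDerivAt Z (- c (Z t') t') t' :=
        fun t' ht' => hZd t' (hm t' ht') (hh t' ht')
      have hcb : ∀ t' ∈ Icc t₁ t, c (Z t') t' ≤ C := by
        intro t' ht'
        refine hC _ _ (hm t' ht').1 ?_
        have h1 := h.r_const (hm t' ht').1 ht'.2
          (fun t'' ht'' => hd t'' ⟨ht'.1.trans ht''.1, ht''.2⟩)
        rw [hZ0] at h1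
        have h2 := h.s_right hX hB (t := t') (x := Z t')
          ⟨(hm t' ht').1, ht'.2.trans ht.2⟩
          ((hXm (hm t' ht').1 ht'.2 ht.2).trans (hZx t' (hm t' ht')))
        linarith
      have h3 := ge_of_deriv (F := Z) (F' := fun t' => - c (Z t') t') (C := -C) ht₁.2
        (hZc.mono hm) (fun t' ht' => hd t' (Ioo_subset_Icc_self ht'))
        (fun t' ht' => neg_le_neg (hcb t' (Ioo_subset_Icc_self ht')))
      rw [hZ0] at h3
      have h4 : C * (t - t₁) ≤ |C| * t := by
        have : C * (t - t₁) ≤ |C| * (t - t₁) :=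
          mul_le_mul_of_nonneg_right (le_abs_self C) (by linarith [ht₁.2])
        nlinarith [abs_nonneg C, ht₁.1]
      linarith [le_abs_self x, ht.1]
    · rw [hZ0]; linarith [le_abs_self x, ht.1]
  have := h.r_const le_rfl ht.1 (fun t' ht' => hZd t' ht' (hle t' ht'))
  rw [hZ0] at this
  rw [this]
  exact hB' _

lemma RSys.sr_on (h : RSys s r c b) {X : ℝ → ℝ} {T B : ℝ}
    (hX : ∀ t ∈ Icc 0 T, HasDerivAt X (c (X t) t) t) (hB : ∀ x, s x 0 ≤ B)
    (hB' : ∀ x, -B ≤ r x 0)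
    {t : ℝ} (ht : t ∈ Icc 0 T) : s (X t) t - r (X t) t ≤ 2 * B := by
  have h1 := h.s_right hX hB ht le_rfl
  have h2 := h.r_on hX hB hB' ht
  linarith

/-- Global existence of forward characteristics. -/
lemma RSys.exists_char (h : RSys s r c b) {T B : ℝ} (hT : 0 ≤ T) (hB : ∀ x, s x 0 ≤ B)
    (hB' : ∀ x, -B ≤ r x 0) (x₀ : ℝ) :
    ∃ X : ℝ → ℝ, X 0 = x₀ ∧ ∀ t ∈ Icc 0 T, HasDerivAt X (c (X t) t) t := by
  obtain ⟨C, hC⟩ := h.bc (2 * B)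
  set N := |x₀| + |C| * T + T + 1 with hNdef
  have hCt : 0 ≤ |C| * T := mul_nonneg (abs_nonneg _) hT
  have hN : 0 < N := by linarith [abs_nonneg x₀]
  have hTN : T ≤ N := by linarith [abs_nonneg x₀]
  obtain ⟨X, hX0, hX⟩ := clip_sol h.hc hN (t₀ := 0) ⟨le_rfl, hN.le⟩ x₀
  have hXm : ∀ {a b}, 0 ≤ a → a ≤ b → b ≤ N → X a ≤ X b := fun ha hab hb =>
    mono_of_deriv hX (fun t ht => (h.cpos _ _ (le_max_left _ _)).le) ha hab hb
  have hXd : ∀ t ∈ Icc 0 T, X t ≤ N → HasDerivAt X (c (X t) t) t := by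
    intro t ht hle
    have := hX t ⟨ht.1, ht.2.trans hTN⟩
    rwa [clip_eq] at this
    · have := hXm le_rfl ht.1 (ht.2.trans hTN)
      rw [hX0] at this
      linarith [neg_abs_le x₀]
    · exact hle
    · exact ht.1
    · exact ht.2.trans hTN
  have hXc : ContinuousOn X (Icc 0 T) :=
    HasDerivAt.continuousOn (fun t' ht' => hX t' ⟨ht'.1, ht'.2.trans hTN⟩)
  refine ⟨X, hX0, fun t ht => hXd t ht (no_exit hXc (fun t₁ ht₁ hh => ?_) ?_ t ht)⟩
  · have hd : ∀ t ∈ Icc 0 t₁, HasDerivAt X (c (X t) t) t := fun t ht =>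
      hXd t ⟨ht.1, ht.2.trans ht₁.2⟩ (hh t ht)
    have h3 := le_of_deriv (F := X) (F' := fun t => c (X t) t) (C := C) ht₁.1
      (HasDerivAt.continuousOn hd) (fun t' ht' => hd t' (Ioo_subset_Icc_self ht'))
      (fun t' ht' => hC _ _ ht'.1.le (h.sr_on hd hB hB' (Ioo_subset_Icc_self ht')))
    rw [hX0] at h3
    have h4 : C * (t₁ - 0) ≤ |C| * T := by
      have : C * (t₁ - 0) ≤ |C| * (t₁ - 0) :=
        mul_le_mul_of_nonneg_right (le_abs_self C) (by linarith [ht₁.1])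
      nlinarith [abs_nonneg C, ht₁.1, ht₁.2]
    linarith [le_abs_self x₀]
  · rw [hX0]; linarith [le_abs_self x₀]

lemma RSys.sx_int (h : RSys s r c b) {X : ℝ → ℝ} {T : ℝ}
    (hX : ∀ t ∈ Icc 0 T, HasDerivAt X (c (X t) t) t) {a t : ℝ} (ha : 0 < a) (hat : a ≤ t)
    (htT : t ≤ T) :
    ∫ σ in a..t, (-(px c (X σ) σ * px s (X σ) σ)) = px s (X t) t - px s (X a) a := by
  have hm : ∀ σ ∈ Icc a t, σ ∈ Icc 0 T := fun σ hσ => ⟨ha.le.trans hσ.1, hσ.2.trans htT⟩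
  have hXc : ContinuousOn X (Icc a t) := HasDerivAt.continuousOn (fun σ hσ => hX σ (hm σ hσ))
  obtain ⟨R, hR⟩ := isCompact_Icc.exists_bound_of_continuousOn hXc
  have hR0 : 0 ≤ R := (norm_nonneg _).trans (hR a ⟨le_rfl, hat⟩)
  set N := R + 1 + t with hN
  have hbox : ∀ σ ∈ Icc a t, ∀ k : ℝ, |k| ≤ 1 → (X σ + k, σ) ∈ Bx N := by
    intro σ hσ k hk
    have h1 := abs_le.1 (Real.norm_eq_abs (X σ) ▸ hR σ hσ)
    have h2 := abs_le.1 hk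
    have : 0 < t := ha.trans_le hat
    refine ⟨⟨?_, ?_⟩, ⟨(hm σ hσ).1, ?_⟩⟩ <;> simp only <;> linarith [hσ.2]
  obtain ⟨K, hK⟩ := h.hc.lip N
  obtain ⟨M, hM⟩ := (Bx_cpt N).exists_bound_of_continuousOn (h.hs.contx.mono (Bx_sub N))
  set F : ℝ → ℝ → ℝ := fun k σ => -((c (X σ + k) σ - c (X σ) σ) / k * px s (X σ + k) σ) with hF
  have hFc : ∀ k, ContinuousOn (F k) (Icc a t) := by
    intro k
    have h1 : ContinuousOn (fun σ => X σ + k) (Icc a t) := hXc.add continuousOn_const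
    exact ((((C1.contc h.hc.cont ha.le h1).sub (C1.contc h.hc.cont ha.le hXc)).div_const k).mul
      (C1.contc h.hs.contx ha.le h1)).neg
  have hid : ∀ k, k ≠ 0 → ∫ σ in a..t, F k σ =
      (s (X t + k) t - s (X t) t) / k - (s (X a + k) a - s (X a) a) / k := by
    intro k hk
    refine intervalIntegral.integral_eq_sub_of_hasDerivAt
      (f := fun σ => (s (X σ + k) σ - s (X σ) σ) / k) (fun σ hσ => ?_)
      ((hFc k).intervalIntegrable_of_Icc hat)
    rw [uIcc_of_le hat] at hσ
    have h0 : 0 < σ := ha.trans_le hσ.1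
    have h1 := hX σ (hm σ hσ)
    have h2 := h.hs.hasc h0 (h1.add_const k)
    have h3 := h.hs.hasc h0 h1
    have h4 := (h2.sub h3).div_const k
    refine HasDerivAt.congr_deriv h4 ?_
    have e1 := h.es (X σ) σ h0
    have e2 := h.es (X σ + k) σ h0
    rw [e1, hF]
    have : pt s (X σ + k) σ = - (c (X σ + k) σ * px s (X σ + k) σ) := by linarith
    rw [this]
    field_simp
    ring
  have hlim1 : Tendsto (fun k => ∫ σ in a..t, F k σ) (nhdsWithin 0 {0}ᶜ)
      (nhds (∫ σ in a..t, (-(px c (X σ) σ * px s (X σ) σ)))) := by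
    refine intervalIntegral.tendsto_integral_filter_of_dominated_convergence
      (fun _ => K * M) ?_ ?_ intervalIntegrable_const ?_
    · refine Eventually.of_forall fun k => ?_
      rw [uIoc_of_le hat]
      exact ((hFc k).mono Ioc_subset_Icc_self).aestronglyMeasurable measurableSet_Ioc
    · have : ∀ᶠ k : ℝ in nhdsWithin 0 {0}ᶜ, |k| ≤ 1 :=
        nhdsWithin_le_nhds (by
          filter_upwards [Icc_mem_nhds (show (-1:ℝ) < 0 by norm_num) (show (0:ℝ) < 1 by norm_num)]
            with k hk using abs_le.2 hk)
      filter_upwards [this, self_mem_nhdsWithin] with k hk hk0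
      refine Eventually.of_forall fun σ hσ => ?_
      rw [uIoc_of_le hat] at hσ
      have hσ' := Ioc_subset_Icc_self hσ
      have hb1 := hbox σ hσ' k hk
      have hb0 := hbox σ hσ' 0 (by simp)
      have h1 := hK.dist_le_mul _ hb1 _ hb0
      have h2 := hM _ hb1
      simp only [add_zero] at h1
      rw [Prod.dist_eq, dist_self, Real.dist_eq, Real.dist_eq, add_sub_cancel_left,
        max_eq_left (abs_nonneg _)] at h1
      have hkp : 0 < |k| := abs_pos.2 hk0
      rw [hF]
      simp only
      rw [norm_neg, norm_mul, norm_div, Real.norm_eq_abs, Real.norm_eq_abs]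
      refine mul_le_mul ?_ h2 (norm_nonneg _) K.2
      rw [div_le_iff₀ hkp]
      exact h1
    · refine Eventually.of_forall fun σ hσ => ?_
      rw [uIoc_of_le hat] at hσ
      have hσ' := Ioc_subset_Icc_self hσ
      have h0 : 0 ≤ σ := (hm σ hσ').1
      have h1 := (h.hc.hasx (x := X σ) h0).tendsto_slope_zero
      have hcont : Continuous (fun x => px s x σ) :=
        h.hs.contx.comp_continuous (f := fun x : ℝ => (x, σ)) (by fun_prop)
          (fun x => mem_SH h0)
      have h2 : Tendsto (fun k => px s (X σ + k) σ) (nhdsWithin 0 {0}ᶜ)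
          (nhds (px s (X σ) σ)) := by
        have : Continuous (fun k => px s (X σ + k) σ) := hcont.comp (by fun_prop)
        have h3 := this.tendsto 0
        simp only [add_zero] at h3
        exact h3.mono_left nhdsWithin_le_nhds
      refine ((h1.mul h2).neg).congr fun k => ?_
      rw [hF]
      simp only [smul_eq_mul]
      ring
  have hlim2 : Tendsto (fun k => ∫ σ in a..t, F k σ) (nhdsWithin 0 {0}ᶜ)
      (nhds (px s (X t) t - px s (X a) a)) := by
    have h1 := (h.hs.hasx (x := X t) (ha.le.trans hat)).tendsto_slope_zero
    have h2 := (h.hs.hasx (x := X a) ha.le).tendsto_slope_zero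
    refine (h1.sub h2).congr' ?_
    filter_upwards [self_mem_nhdsWithin] with k hk
    rw [hid k hk]
    simp only [smul_eq_mul]
    ring
  exact tendsto_nhds_unique hlim1 hlim2

lemma RSys.sx_deriv (h : RSys s r c b) {X : ℝ → ℝ} {T : ℝ}
    (hX : ∀ t ∈ Icc 0 T, HasDerivAt X (c (X t) t) t) {t : ℝ} (ht : t ∈ Ioo 0 T) :
    HasDerivAt (fun t => px s (X t) t) (-(px c (X t) t * px s (X t) t)) t := by
  have hXc : ContinuousOn X (Icc 0 T) := HasDerivAt.continuousOn hX
  have hg : ContinuousOn (fun σ => -(px c (X σ) σ * px s (X σ) σ)) (Icc 0 T) :=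
    ((C1.contc h.hc.contx le_rfl hXc).mul (C1.contc h.hs.contx le_rfl hXc)).neg
  have ht2 : 0 < t / 2 := by linarith [ht.1]
  have h1 := intervalIntegral.integral_hasDerivAt_right
    (f := fun σ => -(px c (X σ) σ * px s (X σ) σ)) (a := t / 2) (b := t)
    ((hg.mono (Icc_subset_Icc ht2.le ht.2.le)).intervalIntegrable_of_Icc (by linarith))
    ((hg.mono Ioo_subset_Icc_self).stronglyMeasurableAtFilter isOpen_Ioo t ht)
    (hg.continuousAt (Icc_mem_nhds ht.1 ht.2))
  have h2 := h1.const_add (px s (X (t/2)) (t/2))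
  refine h2.congr_of_eventuallyEq ?_
  filter_upwards [Ioo_mem_nhds (show t / 2 < t by linarith [ht.1]) ht.2] with σ hσ
  rw [h.sx_int hX ht2 hσ.1.le hσ.2.le]
  ring

/-- The abstract blow-up theorem. -/
theorem RSys.blowup (h : RSys s r c b) {B : ℝ} (hB : ∀ x, s x 0 ≤ B)
    (hB' : ∀ x, -B ≤ r x 0) {x₀ : ℝ} (hx : px s x₀ 0 < 0) : False := by
  obtain ⟨a, ha, hab⟩ := h.ba (2 * B)
  set y₀ := √(c x₀ 0) * px s x₀ 0 with hy0
  have hy0neg : y₀ < 0 := mul_neg_of_pos_of_neg (Real.sqrt_pos.2 (h.cpos _ _ le_rfl)) hx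
  set T := 2 + 2 / (-y₀) / (a / 2) with hT
  have hT1 : 2 ≤ T := by
    have : 0 ≤ 2 / (-y₀) / (a / 2) := by
      have : 0 < -y₀ := by linarith
      positivity
    linarith
  obtain ⟨X, hX0, hX⟩ := h.exists_char (T := T + 1) (by linarith) hB hB' x₀
  have hXc : ContinuousOn X (Icc 0 (T+1)) := HasDerivAt.continuousOn hX
  set y : ℝ → ℝ := fun t => √(c (X t) t) * px s (X t) t with hy
  have hyc : ContinuousOn y (Icc 0 (T+1)) :=
    (C1.contc h.hc.cont le_rfl hXc).sqrt.mul (C1.contc h.hs.contx le_rfl hXc)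
  have hcp : ∀ t, 0 ≤ t → 0 < c (X t) t := fun t ht => h.cpos _ _ ht
  have hyd : ∀ t ∈ Ioo 0 (T+1), HasDerivAt y
      (-(b (X t) t / (2 * (c (X t) t * √(c (X t) t)))) * y t ^ 2) t := by
    intro t ht
    have h1 := h.sx_deriv hX ht
    have h2 := h.hc.hasc ht.1 (hX t (Ioo_subset_Icc_self ht))
    have h3 := (h2.sqrt (hcp t ht.1.le).ne').mul h1
    refine HasDerivAt.congr_deriv h3 ?_
    have e := h.ec (X t) t ht.1
    have e' : pt c (X t) t = c (X t) t * px c (X t) t - b (X t) t * px s (X t) t := by linarith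
    rw [e', hy]
    have hp := hcp t ht.1.le
    have hq := Real.sqrt_pos.2 hp
    have hsq := Real.sq_sqrt hp.le
    simp only
    generalize √(c (X t) t) = q at *
    rw [← hsq]
    field_simp
    ring
  have hcoef : ∀ t ∈ Icc 0 (T+1), a / 2 ≤ b (X t) t / (2 * (c (X t) t * √(c (X t) t))) := by
    intro t ht
    have hp := hcp t ht.1
    have hq := Real.sqrt_pos.2 hp
    have := hab (X t) t ht.1 (h.sr_on hX hB hB' ht)
    rw [le_div_iff₀ (by positivity)]
    linarith
  -- a small positive time
  obtain ⟨e, he0, he1, hye⟩ : ∃ e, 0 < e ∧ e < 1 ∧ y e < y₀ / 2 := by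
    have h1 : ContinuousWithinAt y (Icc 0 (T+1)) 0 := hyc 0 ⟨le_rfl, by linarith⟩
    have hyy : y 0 = y₀ := by rw [hy, hy0]; simp only [hX0]
    have h2 : ContinuousWithinAt y (Ioo 0 1) 0 :=
      h1.mono (fun t ht => ⟨ht.1.le, by linarith [ht.2]⟩)
    have h3 : ∀ᶠ t in nhdsWithin 0 (Ioo (0:ℝ) 1), y t < y₀ / 2 :=
      h2.eventually_lt_const (by rw [hyy]; linarith)
    have : (nhdsWithin (0:ℝ) (Ioo 0 1)).NeBot := by
      rw [← mem_closure_iff_nhdsWithin_neBot, closure_Ioo (by norm_num)]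
      exact ⟨le_rfl, by norm_num⟩
    obtain ⟨e, h4, h5⟩ := (h3.and self_mem_nhdsWithin).exists
    exact ⟨e, h5.1, h5.2, h4⟩
  have hsub : ∀ t ∈ Icc e T, t ∈ Ioo 0 (T+1) := fun t ht =>
    ⟨he0.trans_le ht.1, by linarith [ht.2]⟩
  have hyneg : ∀ t ∈ Icc e T, y t < 0 := by
    intro t ht
    have := le_of_deriv (F := y) (C := 0) ht.1
      (hyc.mono (fun σ hσ => Ioo_subset_Icc_self (hsub σ ⟨hσ.1, hσ.2.trans ht.2⟩)))
      (fun σ hσ => hyd σ (hsub σ ⟨hσ.1.le, hσ.2.le.trans ht.2⟩))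
      (fun σ hσ => by
        have h1 := hcoef σ (Ioo_subset_Icc_self (hsub σ ⟨hσ.1.le, hσ.2.le.trans ht.2⟩))
        nlinarith [sq_nonneg (y σ)])
    linarith
  have hz := ge_of_deriv (F := fun t => (y t)⁻¹) (C := a / 2) (a := e) (b := T) (by linarith)
    (HasDerivAt.continuousOn (fun σ hσ => (hyd σ (hsub σ hσ)).inv (hyneg σ hσ).ne))
    (fun σ hσ => (hyd σ (hsub σ (Ioo_subset_Icc_self hσ))).inv
      (hyneg σ (Ioo_subset_Icc_self hσ)).ne)
    (fun σ hσ => by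
      have hσ' := Ioo_subset_Icc_self hσ
      have h1 := hcoef σ (Ioo_subset_Icc_self (hsub σ hσ'))
      have h2 := (hyneg σ hσ').ne
      have h3 : 0 < y σ ^ 2 := by positivity
      rw [le_div_iff₀ h3]
      nlinarith)
  have hzT : (y T)⁻¹ < 0 := inv_lt_zero.2 (hyneg T ⟨by linarith, le_rfl⟩)
  have hze : (y₀ / 2)⁻¹ ≤ (y e)⁻¹ :=
    (inv_le_inv_of_neg (by linarith) (hyneg e ⟨le_rfl, by linarith⟩)).2 hye.le
  have h5 : a / 2 * (T - e) ≥ a / 2 * (T - 1) :=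
    mul_le_mul_of_nonneg_left (by linarith) (by linarith)
  have h6 : a / 2 * (T - 2) = 2 / (-y₀) := by
    rw [hT]; field_simp; ring
  have h7 : (y₀ / 2)⁻¹ = - (2 / (-y₀)) := by
    rw [inv_div, div_neg, neg_neg]
  nlinarith

/-! ### The p-system -/

lemma px_add {f g : ℝ → ℝ → ℝ} (hf : C1 f) (hg : C1 g) {x t : ℝ} (ht : 0 ≤ t) :
    px (fun x t => f x t + g x t) x t = px f x t + px g x t :=
  (C1.hasx (f := fun x t => f x t + g x t) (ContDiffOn.add hf hg) ht).unique
    ((hf.hasx ht).add (hg.hasx ht))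

lemma pt_add {f g : ℝ → ℝ → ℝ} (hf : C1 f) (hg : C1 g) {x t : ℝ} (ht : 0 < t) :
    pt (fun x t => f x t + g x t) x t = pt f x t + pt g x t :=
  (C1.hast (f := fun x t => f x t + g x t) (ContDiffOn.add hf hg) ht).unique
    ((hf.hast ht).add (hg.hast ht))

lemma px_sub {f g : ℝ → ℝ → ℝ} (hf : C1 f) (hg : C1 g) {x t : ℝ} (ht : 0 ≤ t) :
    px (fun x t => f x t - g x t) x t = px f x t - px g x t :=
  (C1.hasx (f := fun x t => f x t - g x t) (ContDiffOn.sub hf hg) ht).unique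
    ((hf.hasx ht).sub (hg.hasx ht))

lemma pt_sub {f g : ℝ → ℝ → ℝ} (hf : C1 f) (hg : C1 g) {x t : ℝ} (ht : 0 < t) :
    pt (fun x t => f x t - g x t) x t = pt f x t - pt g x t :=
  (C1.hast (f := fun x t => f x t - g x t) (ContDiffOn.sub hf hg) ht).unique
    ((hf.hast ht).sub (hg.hast ht))

lemma px_comp {f : ℝ → ℝ → ℝ} {G : ℝ → ℝ} {g : ℝ} (hf : C1 f) (hG : C1 (fun x t => G (f x t)))
    {x t : ℝ} (ht : 0 ≤ t) (hg : HasDerivAt G g (f x t)) :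
    px (fun x t => G (f x t)) x t = g * px f x t :=
  (hG.hasx ht).unique (hg.comp x (hf.hasx ht))

lemma pt_comp {f : ℝ → ℝ → ℝ} {G : ℝ → ℝ} {g : ℝ} (hf : C1 f) (hG : C1 (fun x t => G (f x t)))
    {x t : ℝ} (ht : 0 < t) (hg : HasDerivAt G g (f x t)) :
    pt (fun x t => G (f x t)) x t = g * pt f x t :=
  (hG.hast ht).unique (hg.comp t (hf.hast ht))

lemma C1.rpow {f : ℝ → ℝ → ℝ} (hf : C1 f) (hpos : ∀ x t, 0 ≤ t → 0 < f x t) (k e : ℝ) :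
    C1 (fun x t => k * f x t ^ e) := by
  have : ContDiffOn ℝ 1 (fun p : ℝ × ℝ => f p.1 p.2 ^ e) SH :=
    ContDiffOn.rpow_const_of_ne hf (fun p hp => (hpos p.1 p.2 hp.2).ne')
  exact contDiffOn_const.mul this

section
variable {K₁ γ : ℝ}

lemma eta_deriv (hγ : 3 ≤ γ) {y : ℝ} (hy : 0 < y) :
    HasDerivAt (etaP K₁ γ) (- soundP K₁ γ y) y := by
  have h1 := (Real.hasDerivAt_rpow_const (x := y) (p := -(γ - 1) / 2) (Or.inl hy.ne')).const_mul
    (2 * √(K₁ * γ) / (γ - 1))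
  refine HasDerivAt.congr_deriv h1 ?_
  unfold soundP
  rw [show -(γ - 1) / 2 - 1 = -(γ + 1) / 2 by ring]
  have : γ - 1 ≠ 0 := by linarith
  field_simp

lemma sound_deriv {y : ℝ} (hy : 0 < y) :
    HasDerivAt (soundP K₁ γ) (- ((γ + 1) / 2 * soundP K₁ γ y / y)) y := by
  have h1 := (Real.hasDerivAt_rpow_const (x := y) (p := -(γ + 1) / 2) (Or.inl hy.ne')).const_mul
    (√(K₁ * γ))
  refine HasDerivAt.congr_deriv h1 ?_
  unfold soundP
  rw [Real.rpow_sub_one hy.ne']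
  ring

lemma press_deriv (hK : 0 < K₁) (hγ : 3 ≤ γ) {y : ℝ} (hy : 0 < y) :
    HasDerivAt (fun y => K₁ * y ^ (-γ)) (- soundP K₁ γ y ^ 2) y := by
  have h1 := (Real.hasDerivAt_rpow_const (x := y) (p := -γ) (Or.inl hy.ne')).const_mul K₁
  refine HasDerivAt.congr_deriv h1 ?_
  unfold soundP
  rw [mul_pow, Real.sq_sqrt (by positivity), ← Real.rpow_natCast (y ^ _), ← Real.rpow_mul hy.le,
    show -(γ + 1) / 2 * ((2:ℕ):ℝ) = -γ - 1 by push_cast; ring]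
  ring

lemma psi_bound (hK : 0 < K₁) (hγ : 3 ≤ γ) (B : ℝ) : ∃ D : ℝ, 0 < D ∧
    ∀ y, 0 < y → 2 * etaP K₁ γ y ≤ B → y ^ (-(γ - 1) / 2) ≤ D := by
  have hA : 0 < 2 * √(K₁ * γ) / (γ - 1) := by
    have : 0 < √(K₁ * γ) := Real.sqrt_pos.2 (by positivity)
    have : 0 < γ - 1 := by linarith
    positivity
  refine ⟨|B| / (2 * (2 * √(K₁ * γ) / (γ - 1))) + 1, by positivity, fun y hy h => ?_⟩
  unfold etaP at h
  generalize 2 * √(K₁ * γ) / (γ - 1) = A at *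
  have : y ^ (-(γ - 1) / 2) ≤ |B| / (2 * A) := by
    rw [le_div_iff₀ (by positivity)]
    linarith [le_abs_self B]
  linarith

lemma bc_bound (hK : 0 < K₁) (hγ : 3 ≤ γ) (B : ℝ) : ∃ C : ℝ,
    ∀ y, 0 < y → 2 * etaP K₁ γ y ≤ B → soundP K₁ γ y ≤ C := by
  obtain ⟨D, hD, h⟩ := psi_bound hK hγ B
  refine ⟨√(K₁ * γ) * D ^ ((γ + 1) / (γ - 1)), fun y hy hh => ?_⟩
  have h1 := h y hy hh
  have hg : 0 < γ - 1 := by linarith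
  unfold soundP
  have : y ^ (-(γ + 1) / 2) = (y ^ (-(γ - 1) / 2)) ^ ((γ + 1) / (γ - 1)) := by
    rw [← Real.rpow_mul hy.le]
    congr 1
    field_simp
  rw [this]
  gcongr

lemma ba_bound (hK : 0 < K₁) (hγ : 3 ≤ γ) (B : ℝ) : ∃ a : ℝ, 0 < a ∧
    ∀ y, 0 < y → 2 * etaP K₁ γ y ≤ B →
      a * (soundP K₁ γ y * √(soundP K₁ γ y)) ≤ (γ + 1) / 2 * soundP K₁ γ y / y := by
  obtain ⟨D, hD, h⟩ := psi_bound hK hγ B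
  have hk : 0 < √(K₁ * γ) := Real.sqrt_pos.2 (by positivity)
  have hkk : 0 < √√(K₁ * γ) := Real.sqrt_pos.2 hk
  have hg : 0 < γ - 1 := by linarith
  set Q := √√(K₁ * γ) * D ^ ((γ - 3) / (2 * (γ - 1))) with hQ
  have hQ0 : 0 < Q := by positivity
  refine ⟨(γ + 1) / 2 / Q, by positivity, fun y hy hh => ?_⟩
  have h1 := h y hy hh
  have hc : 0 < soundP K₁ γ y := by unfold soundP; positivity
  have key : √(soundP K₁ γ y) * y ≤ Q := by
    have e : √(soundP K₁ γ y) * y = √√(K₁ * γ) * (y ^ (-(γ - 1) / 2)) ^ ((γ - 3) / (2 * (γ - 1))) := by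
      unfold soundP
      rw [Real.sqrt_mul hk.le, ← Real.rpow_mul hy.le, Real.sqrt_eq_rpow (y ^ _),
        ← Real.rpow_mul hy.le, mul_assoc, ← Real.rpow_add_one hy.ne']
      congr 2
      field_simp
      ring
    rw [e, hQ]
    have : 0 ≤ (γ - 3) / (2 * (γ - 1)) := div_nonneg (by linarith) (by linarith)
    gcongr
  rw [le_div_iff₀ hy]
  calc (γ + 1) / 2 / Q * (soundP K₁ γ y * √(soundP K₁ γ y)) * y
      = (γ + 1) / 2 * soundP K₁ γ y / Q * (√(soundP K₁ γ y) * y) := by ring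
    _ ≤ (γ + 1) / 2 * soundP K₁ γ y / Q * Q := by gcongr
    _ = (γ + 1) / 2 * soundP K₁ γ y := by field_simp

lemma psys_rsys (hK : 0 < K₁) (hγ : 3 ≤ γ) {τ u : ℝ → ℝ → ℝ}
    (h : PSysSol K₁ γ (Set.Ici 0) 1 τ u) :
    RSys (fun x t => u x t + etaP K₁ γ (τ x t)) (fun x t => u x t - etaP K₁ γ (τ x t))
      (fun x t => soundP K₁ γ (τ x t)) (fun x t => (γ + 1) / 2 * soundP K₁ γ (τ x t) / τ x t) := by
  obtain ⟨hpos, hτ, hu, h1, h2⟩ := h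
  rw [Nat.cast_one] at hτ hu
  have hpos' : ∀ x t, 0 ≤ t → 0 < τ x t := fun x t ht => hpos x t ht
  have cτ : C1 τ := hτ
  have cu : C1 u := hu
  have ce : C1 (fun x t => etaP K₁ γ (τ x t)) := cτ.rpow hpos' _ _
  have cc : C1 (fun x t => soundP K₁ γ (τ x t)) := cτ.rpow hpos' _ _
  have cp : C1 (fun x t => K₁ * τ x t ^ (-γ)) := cτ.rpow hpos' _ _
  have e1 : ∀ x t, 0 < t → pt τ x t = px u x t := by
    intro x t ht
    have := h1 x t ht.le
    rw [(cτ.hast ht).deriv, (cu.hasx ht.le).deriv] at this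
    linarith
  have e2 : ∀ x t, 0 < t → pt u x t = soundP K₁ γ (τ x t) ^ 2 * px τ x t := by
    intro x t ht
    have := h2 x t ht.le
    rw [(cu.hast ht).deriv, (cp.hasx ht.le).deriv,
      px_comp (G := fun y => K₁ * y ^ (-γ)) cτ cp ht.le (press_deriv hK hγ (hpos' x t ht.le))]
      at this
    linarith
  have exe : ∀ x t, 0 < t → px (fun x t => etaP K₁ γ (τ x t)) x t
      = - soundP K₁ γ (τ x t) * px τ x t := fun x t ht =>
    px_comp cτ ce ht.le (eta_deriv hγ (hpos' x t ht.le))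
  have ete : ∀ x t, 0 < t → pt (fun x t => etaP K₁ γ (τ x t)) x t
      = - soundP K₁ γ (τ x t) * pt τ x t := fun x t ht =>
    pt_comp cτ ce ht (eta_deriv hγ (hpos' x t ht.le))
  have hk : 0 < √(K₁ * γ) := Real.sqrt_pos.2 (by positivity)
  refine ⟨ContDiffOn.add cu ce, ContDiffOn.sub cu ce, cc, fun x t ht => ?_, fun x t ht => ?_,
    fun x t ht => ?_, fun x t ht => ?_, fun B => ?_, fun B => ?_⟩
  · have := hpos' x t ht
    unfold soundP; positivity
  · rw [pt_add cu ce ht, px_add cu ce ht.le, exe x t ht, ete x t ht, e2 x t ht, e1 x t ht]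
    ring
  · rw [pt_sub cu ce ht, px_sub cu ce ht.le, exe x t ht, ete x t ht, e2 x t ht, e1 x t ht]
    ring
  · rw [px_add cu ce ht.le, exe x t ht, pt_comp cτ cc ht (sound_deriv (hpos' x t ht.le)),
      px_comp cτ cc ht.le (sound_deriv (hpos' x t ht.le)), e1 x t ht]
    ring
  · obtain ⟨C, hC⟩ := bc_bound hK hγ B
    exact ⟨C, fun x t ht hh => hC _ (hpos' x t ht) (by linarith)⟩
  · obtain ⟨a, ha, hC⟩ := ba_bound hK hγ B
    exact ⟨a, ha, fun x t ht hh => hC _ (hpos' x t ht) (by linarith)⟩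

lemma psys_s (hK : 0 < K₁) (hγ : 3 ≤ γ) {τ u : ℝ → ℝ → ℝ}
    (h : PSysSol K₁ γ (Set.Ici 0) 1 τ u) {M₁ M₂ : ℝ} (hM₂ : 0 < M₂)
    (hu : ∀ x, |u x 0| ≤ M₁) (hτ : ∀ x, M₂ ≤ τ x 0) {x₀ : ℝ}
    (hx : deriv (fun x => u x 0 + etaP K₁ γ (τ x 0)) x₀ < 0) : False := by
  have hR := psys_rsys hK hγ h
  have hb : ∀ x, etaP K₁ γ (τ x 0) ≤ etaP K₁ γ M₂ := by
    intro x
    unfold etaP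
    have : 0 ≤ 2 * √(K₁ * γ) / (γ - 1) := div_nonneg (by positivity) (by linarith)
    exact mul_le_mul_of_nonneg_left
      (Real.rpow_le_rpow_of_nonpos hM₂ (hτ x) (by linarith)) this
  refine hR.blowup (B := M₁ + etaP K₁ γ M₂) (x₀ := x₀) (fun x => ?_) (fun x => ?_) ?_
  · linarith [hb x, (abs_le.1 (hu x)).2]
  · linarith [hb x, (abs_le.1 (hu x)).1]
  · rw [← (hR.hs.hasx (x := x₀) le_rfl).deriv]
    exact hx

lemma psys_refl {τ u : ℝ → ℝ → ℝ}
    (h : PSysSol K₁ γ (Set.Ici 0) 1 τ u) :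
    PSysSol K₁ γ (Set.Ici 0) 1 (fun x t => τ (-x) t) (fun x t => - u (-x) t) := by
  obtain ⟨hpos, hτ, hu, h1, h2⟩ := h
  have hm : ContDiffOn ℝ ((1:ℕ) : WithTop ℕ∞) (fun p : ℝ × ℝ => (-p.1, p.2))
      ((univ : Set ℝ) ×ˢ Ici (0:ℝ)) := by
    apply ContDiff.contDiffOn
    fun_prop
  have hmt : MapsTo (fun p : ℝ × ℝ => (-p.1, p.2)) ((univ : Set ℝ) ×ˢ Ici (0:ℝ))
    ((univ : Set ℝ) ×ˢ Ici (0:ℝ)) := fun p hp => ⟨trivial, hp.2⟩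
  refine ⟨fun x t ht => hpos _ _ ht, hτ.comp hm hmt, (hu.comp hm hmt).neg, fun x t ht => ?_,
    fun x t ht => ?_⟩
  · have e := deriv_comp_neg (fun x' => - u x' t) x
    rw [e, deriv.fun_neg, neg_neg]
    exact h1 (-x) t ht
  · have e := deriv_comp_neg (fun x' => K₁ * τ x' t ^ (-γ)) x
    rw [e, deriv.fun_neg, ← neg_add, h2 (-x) t ht, neg_zero]

end

/-- Proposition 2.1 (Lax, adapted): for `γ ≥ 3` and initial data satisfying Assumption A,
if the initial data are compressive at some point (`s_x(x*,0) < 0` or `r_x(x*,0) < 0`),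
then there is no global-in-time `C¹` solution of the p-system on `ℝ × [0,∞)`. -/
theorem psystem_blowup_gamma_ge_three
    (K₁ γ M₁ M₂ : ℝ) (hK₁ : 0 < K₁) (hγ : 3 ≤ γ)
    (τ₀ u₀ : ℝ → ℝ) (hA : AssumptionA M₁ M₂ τ₀ u₀)
    (hcomp : ∃ xstar : ℝ,
      deriv (fun x => u₀ x + etaP K₁ γ (τ₀ x)) xstar < 0 ∨
      deriv (fun x => u₀ x - etaP K₁ γ (τ₀ x)) xstar < 0) :
    ¬ ∃ τ u : ℝ → ℝ → ℝ,
        PSysSol K₁ γ (Set.Ici 0) 1 τ u ∧ (∀ x, τ x 0 = τ₀ x) ∧ (∀ x, u x 0 = u₀ x) := by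
  rintro ⟨τ, u, h, h0, h0'⟩
  obtain ⟨-, -, -, hM₂, hM, hτ⟩ := hA
  have hu : ∀ x, |u x 0| ≤ M₁ := fun x => by
    rw [h0']
    linarith [hM x, abs_nonneg (τ₀ x), abs_nonneg (deriv τ₀ x), abs_nonneg (deriv u₀ x)]
  have hτ' : ∀ x, M₂ ≤ τ x 0 := fun x => by rw [h0]; exact hτ x
  obtain ⟨xs, hx | hx⟩ := hcomp
  · refine psys_s hK₁ hγ h hM₂ hu hτ' (x₀ := xs) ?_
    simpa only [h0, h0'] using hx
  · refine psys_s hK₁ hγ (psys_refl h) hM₂ (M₁ := M₁) (fun x => ?_) (fun x => hτ' (-x))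
      (x₀ := -xs) ?_
    · simpa using hu (-x)
    · have e := deriv_comp_neg (fun x => u x 0 - etaP K₁ γ (τ x 0)) (-xs)
      rw [neg_neg] at e
      have e2 : (fun x => -u (-x) 0 + etaP K₁ γ (τ (-x) 0)) =
          fun x => -(u (-x) 0 - etaP K₁ γ (τ (-x) 0)) := by
        funext x; ring
      rw [e2, deriv.fun_neg, e, neg_neg]
      simpa only [h0, h0'] using hx
end

section
/- (Lemma 2.3) Let γ > 1 and let the initial data (τ₀,u₀) satisfy Assumption A. Then every C¹ solution (τ,u) of the p-system on ℝ × [0,T) with this initial data satisfies y(x,t) ≤ Y and q(x,t) ≤ Q for all (x,t) ∈ ℝ × [0,T), where Y = max{0, sup_x y(x,0)} and Q = max{0, sup_x q(x,0)}. -/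
open Real Set MeasureTheory Filter

/-- Backward trapezoid. -/
def trapZ (R C t1 : ℝ) : Set (ℝ × ℝ) := {p | 0 ≤ p.2 ∧ p.2 ≤ t1 ∧ |p.1| ≤ R - C * p.2}

lemma trapZ_compact {R C t1 : ℝ} (hC : 0 ≤ C) : IsCompact (trapZ R C t1) := by
  have hcl : IsClosed (trapZ R C t1) := by
    have e : trapZ R C t1 = {p : ℝ × ℝ | 0 ≤ p.2} ∩ ({p : ℝ × ℝ | p.2 ≤ t1} ∩
      {p : ℝ × ℝ | |p.1| ≤ R - C * p.2}) := rfl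
    rw [e]
    exact (isClosed_le (by fun_prop) (by fun_prop)).inter
      ((isClosed_le (by fun_prop) (by fun_prop)).inter (isClosed_le (by fun_prop) (by fun_prop)))
  refine (isCompact_Icc (a := ((-R, 0) : ℝ × ℝ)) (b := (R, t1))).of_isClosed_subset hcl ?_
  rintro ⟨x, t⟩ ⟨h0, h1, h2⟩
  simp only at h0 h1 h2
  have := abs_le.1 h2
  have h3 : 0 ≤ C * t := mul_nonneg hC h0
  exact ⟨⟨by simp; linarith, h0⟩, ⟨by simp; linarith, h1⟩⟩

lemma trapZ_back {R C t1 x t v h : ℝ} (hp : (x, t) ∈ trapZ R C t1) (hv : |v| ≤ C) (h0 : 0 ≤ h)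
    (ht : h ≤ t) : (x - h * v, t - h) ∈ trapZ R C t1 := by
  obtain ⟨a, b, c⟩ := hp
  simp only at a b c
  refine ⟨by simp; linarith, by simp; linarith, ?_⟩
  simp only
  have h1 : |x - h * v| ≤ |x| + |h * v| := abs_sub _ _
  have h2 : |h * v| ≤ h * C := by
    rw [abs_mul, abs_of_nonneg h0]; gcongr
  linarith

lemma deriv_nonpos_of_right {f : ℝ → ℝ} {f' δ : ℝ} (hf : HasDerivAt f f' 0) (hδ : 0 < δ)
    (h : ∀ x, 0 < x → x < δ → f x ≤ f 0) : f' ≤ 0 := by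
  have h1 : Tendsto (fun t => t⁻¹ • (f (0 + t) - f 0)) (nhdsWithin 0 (Ioi 0)) (nhds f') :=
    hf.tendsto_slope_zero_right
  refine le_of_tendsto h1 ?_
  filter_upwards [Ioo_mem_nhdsGT hδ] with x hx
  have := h x hx.1 hx.2
  simp only [zero_add, smul_eq_mul]
  exact mul_nonpos_of_nonneg_of_nonpos (inv_nonneg.2 hx.1.le) (by linarith)

lemma coreA {T t1 R C a b : ℝ} (ht1 : t1 < T) (hC : 0 ≤ C) {S N c : ℝ → ℝ → ℝ}
    (hS : ContinuousOn (fun p : ℝ × ℝ => S p.1 p.2) (univ ×ˢ Ico 0 T))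
    (hN : ContinuousOn (fun p : ℝ × ℝ => N p.1 p.2) (univ ×ˢ Ico 0 T))
    (hc0 : ∀ x, ∀ t ∈ Ico 0 T, 0 ≤ c x t)
    (hcC : ∀ x, ∀ t ∈ Ico 0 T, S x t + N x t ≤ a + b + 2 → c x t ≤ C)
    (hSa : ∀ x, S x 0 ≤ a) (hNb : ∀ x, N x 0 ≤ b)
    (hSd : ∀ x, ∀ t ∈ Ioo 0 T, HasDerivAt (fun h => S (x - h * c x t) (t - h)) 0 0)
    (hNd : ∀ x, ∀ t ∈ Ioo 0 T, HasDerivAt (fun h => N (x - h * (-c x t)) (t - h)) 0 0) :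
    ∀ p ∈ trapZ R C t1, c p.1 p.2 ≤ C := by
  intro p hp
  have ht10 : 0 ≤ t1 := hp.1.trans hp.2.1
  have hsub : trapZ R C t1 ⊆ univ ×ˢ Ico 0 T := fun p hp => ⟨trivial, hp.1, hp.2.1.trans_lt ht1⟩
  obtain ⟨ε, hε, hεt⟩ : ∃ ε : ℝ, 0 < ε ∧ ε * (1 + t1) = 1 :=
    ⟨(1 + t1)⁻¹, by positivity, by field_simp⟩
  have hle : ∀ p ∈ trapZ R C t1, ε * (1 + p.2) ≤ 1 := fun p hp => by
    have h1 := mul_le_mul_of_nonneg_left hp.2.1 hε.le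
    linarith
  let f : ℝ × ℝ → ℝ := fun p => max (S p.1 p.2 - a) (N p.1 p.2 - b) - ε * (1 + p.2)
  have hf : ContinuousOn f (trapZ R C t1) := by
    have h1 := hS.mono hsub
    have h2 := hN.mono hsub
    unfold f
    exact ((h1.sub continuousOn_const).sup (h2.sub continuousOn_const)).sub (by fun_prop)
  have hbad : ∀ p ∈ trapZ R C t1, f p < 0 := by
    by_contra! hcon
    obtain ⟨p0, hp0, hfp0⟩ := hcon
    have hK : IsCompact (trapZ R C t1 ∩ f ⁻¹' Ici 0) := by
      have hcm := trapZ_compact (R := R) (t1 := t1) hC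
      exact hcm.of_isClosed_subset (hf.preimage_isClosed_of_isClosed hcm.isClosed isClosed_Ici) inter_subset_left
    obtain ⟨⟨x, t⟩, ⟨hq, hfq⟩, hmin⟩ := hK.exists_isMinOn ⟨p0, hp0, hfp0⟩ (f := fun p : ℝ × ℝ => p.2) (by fun_prop)
    have hfq : 0 ≤ f (x, t) := hfq
    have hearly : ∀ p ∈ trapZ R C t1, p.2 < t → f p < 0 := by
      intro p hp hpt
      by_contra! h
      have := hmin (show p ∈ _ from ⟨hp, h⟩)
      simp at this; linarith
    have htpos : 0 < t := by
      rcases hq.1.lt_or_eq with h | h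
      · exact h
      · exfalso
        simp only at h
        subst h
        have h1 := hSa x
        have h2 := hNb x
        have h3 : max (S x 0 - a) (N x 0 - b) ≤ 0 := max_le (by linarith) (by linarith)
        simp [f] at hfq
        simp at h3
        rcases hfq with h | h <;> linarith
    have htI : t ∈ Ioo 0 T := ⟨htpos, hq.2.1.trans_lt ht1⟩
    have hf0 : f (x, t) ≤ 0 := by
      have h1 : Tendsto (fun h : ℝ => (x - h * 0, t - h)) (nhdsWithin 0 (Ioo 0 t)) (nhdsWithin (x, t) (trapZ R C t1)) := by
        refine tendsto_nhdsWithin_iff.2 ⟨?_, ?_⟩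
        · have : Continuous (fun h : ℝ => (x - h * 0, t - h)) := by fun_prop
          have := this.tendsto 0
          simp only [mul_zero, sub_zero] at this ⊢
          exact this.mono_left nhdsWithin_le_nhds
        · filter_upwards [self_mem_nhdsWithin] with h hh
          exact trapZ_back hq (by simpa using hC) hh.1.le hh.2.le
      have h2 := (hf (x, t) hq).tendsto.comp h1
      have : (nhdsWithin (0:ℝ) (Ioo 0 t)).NeBot := by
        rw [nhdsWithin_Ioo_eq_nhdsGT htpos]; infer_instance
      refine le_of_tendsto h2 ?_
      filter_upwards [self_mem_nhdsWithin] with h hh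
      exact (hearly _ (trapZ_back hq (by simpa using hC) hh.1.le hh.2.le) (by simp; exact hh.1)).le
    have hmax : max (S x t - a) (N x t - b) ≤ ε * (1 + t) := by simp only [f] at hf0; linarith
    have hmax' := max_le_iff.1 hmax
    have hcC' : |c x t| ≤ C := by
      rw [abs_of_nonneg (hc0 x t ⟨htI.1.le, htI.2⟩)]
      refine hcC x t ⟨htI.1.le, htI.2⟩ ?_
      have := hle _ hq
      simp only at this
      linarith
    have key : ∀ (V : ℝ → ℝ → ℝ) (d v : ℝ), |v| ≤ C →
        (∀ p : ℝ × ℝ, V p.1 p.2 - d - ε * (1 + p.2) ≤ f p) → 0 ≤ V x t - d - ε * (1 + t) →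
        HasDerivAt (fun h => V (x - h * v) (t - h)) 0 0 → False := by
      intro V d v hv h1 h2 h3
      have h4 := h3.add ((hasDerivAt_id (0:ℝ)).const_mul ε)
      have h5 := deriv_nonpos_of_right h4 htpos (by
        intro h hh0 hht
        have h6 := trapZ_back hq hv hh0.le hht.le
        have h7 := hearly _ h6 (by simp; exact hh0)
        have h8 := h1 (x - h * v, t - h)
        simp at h8 ⊢
        linarith)
      simp at h5
      linarith
    rcases le_total (S x t - a) (N x t - b) with h | h
    · refine key N b (-c x t) (by rwa [abs_neg]) (fun p => ?_) ?_ (hNd x t htI)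
      · simp only [f]; linarith [le_max_right (S p.1 p.2 - a) (N p.1 p.2 - b)]
      · simp only [f, max_eq_right h] at hfq; linarith
    · refine key S a (c x t) hcC' (fun p => ?_) ?_ (hSd x t htI)
      · simp only [f]; linarith [le_max_left (S p.1 p.2 - a) (N p.1 p.2 - b)]
      · simp only [f, max_eq_left h] at hfq; linarith
  have h1 := hbad p hp
  have h2 := hle p hp
  simp only [f] at h1
  have h3 := le_max_left (S p.1 p.2 - a) (N p.1 p.2 - b)
  have h4 := le_max_right (S p.1 p.2 - a) (N p.1 p.2 - b)
  exact hcC _ _ (hsub hp).2 (by linarith)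

set_option maxHeartbeats 1000000 in
lemma coreB {T t1 R C Y : ℝ} (ht1 : t1 < T) (hC : 0 ≤ C) (hY : 0 ≤ Y)
    {S c w sx cx g : ℝ → ℝ → ℝ}
    (hS : ContinuousOn (fun p : ℝ × ℝ => S p.1 p.2) (univ ×ˢ Ico 0 T))
    (hw : ContinuousOn (fun p : ℝ × ℝ => w p.1 p.2) (univ ×ˢ Ico 0 T))
    (hsx : ContinuousOn (fun p : ℝ × ℝ => sx p.1 p.2) (univ ×ˢ Ico 0 T))
    (hcx : ContinuousOn (fun p : ℝ × ℝ => cx p.1 p.2) (univ ×ˢ Ico 0 T))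
    (hg : ContinuousOn (fun p : ℝ × ℝ => g p.1 p.2) (univ ×ˢ Ico 0 T))
    (hc0 : ∀ x, ∀ t ∈ Ico 0 T, 0 ≤ c x t)
    (hg0 : ∀ x, ∀ t ∈ Ico 0 T, 0 ≤ g x t)
    (hw0 : ∀ x, ∀ t ∈ Ico 0 T, 0 < w x t)
    (hcC : ∀ p ∈ trapZ R C t1, c p.1 p.2 ≤ C)
    (hSx : ∀ x, ∀ t ∈ Ico 0 T, HasDerivAt (fun x' => S x' t) (sx x t) x)
    (hCx : ∀ x, ∀ t ∈ Ico 0 T, HasDerivAt (fun x' => c x' t) (cx x t) x)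
    (hSd : ∀ x, ∀ t ∈ Ioo 0 T, HasDerivAt (fun h => S (x - h * c x t) (t - h)) 0 0)
    (hwd : ∀ x, ∀ t ∈ Ioo 0 T, HasDerivAt (fun h => w (x - h * c x t) (t - h))
      (-(-(w x t * cx x t) + g x t * sx x t)) 0)
    (hinit : ∀ x, sx x 0 ≤ Y * w x 0)
    (x0 : ℝ) (ht0 : 0 ≤ t1) (hx0 : |x0| < R - C * t1) : sx x0 t1 ≤ Y * w x0 t1 := by
  have hsub : trapZ R C t1 ⊆ univ ×ˢ Ico 0 T := fun p hp => ⟨trivial, hp.1, hp.2.1.trans_lt ht1⟩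
  have hcm := trapZ_compact (R := R) (t1 := t1) hC
  have hne : (trapZ R C t1).Nonempty := ⟨(x0, t1), ht0, le_rfl, hx0.le⟩
  obtain ⟨pw, hpw, hpwmin⟩ := hcm.exists_isMinOn hne (hw.mono hsub)
  obtain ⟨W, hW⟩ := hcm.exists_bound_of_continuousOn (hw.mono hsub)
  obtain ⟨G, hG⟩ := hcm.exists_bound_of_continuousOn (hg.mono hsub)
  obtain ⟨K, hK⟩ := hcm.exists_bound_of_continuousOn (hcx.mono hsub)
  have hK0 : 0 ≤ K := (norm_nonneg _).trans (hK _ hpw)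
  have hG0 : 0 ≤ G := (norm_nonneg _).trans (hG _ hpw)
  have hW0 : 0 ≤ W := (norm_nonneg _).trans (hW _ hpw)
  set w0 := w pw.1 pw.2 with hw0def
  have hw0pos : 0 < w0 := hw0 _ _ (hsub hpw).2
  have hwmin : ∀ x t, (x, t) ∈ trapZ R C t1 → w0 ≤ w x t := fun x t h => hpwmin h
  have hmvt : ∀ (V vx : ℝ → ℝ → ℝ), (∀ x, ∀ t ∈ Ico 0 T, HasDerivAt (fun x' => V x' t) (vx x t) x) →
      ∀ x1 x2 t, x1 < x2 → (x1, t) ∈ trapZ R C t1 → (x2, t) ∈ trapZ R C t1 →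
      ∃ ξ, x1 < ξ ∧ ξ < x2 ∧ (ξ, t) ∈ trapZ R C t1 ∧ V x2 t - V x1 t = vx ξ t * (x2 - x1) := by
    intro V vx hV x1 x2 t hlt h1 h2
    have htI := (hsub h1).2
    obtain ⟨ξ, hξ, he⟩ := exists_hasDerivAt_eq_slope (fun x' => V x' t) (fun x' => vx x' t) hlt
      (fun x _ => (hV x t htI).continuousAt.continuousWithinAt) (fun x _ => hV x t htI)
    refine ⟨ξ, hξ.1, hξ.2, ⟨h1.1, h1.2.1, ?_⟩, ?_⟩
    · have a1 := abs_le.1 h1.2.2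
      have a2 := abs_le.1 h2.2.2
      simp only at a1 a2 ⊢
      exact abs_le.2 ⟨by linarith [hξ.1], by linarith [hξ.2]⟩
    · have : x2 - x1 ≠ 0 := by linarith
      rw [he]; field_simp
  -- reduce to epsilon
  suffices H : ∀ ε > 0, sx x0 t1 ≤ (Y + ε * (1 + t1)) * w x0 t1 by
    have h1 : Tendsto (fun ε : ℝ => (Y + ε * (1 + t1)) * w x0 t1) (nhdsWithin 0 (Ioi 0)) (nhds (Y * w x0 t1)) := by
      have : Continuous (fun ε : ℝ => (Y + ε * (1 + t1)) * w x0 t1) := by fun_prop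
      have := this.tendsto 0
      simp only [zero_mul, add_zero] at this
      exact this.mono_left nhdsWithin_le_nhds
    refine ge_of_tendsto h1 ?_
    filter_upwards [self_mem_nhdsWithin] with ε hε using H ε hε
  intro ε hε
  set M := Y + ε * (1 + t1) with hM
  have hMpos : 0 < M := by positivity
  obtain ⟨ω, hω, hωlt⟩ := exists_pos_mul_lt (show 0 < ε * w0 by positivity) (M * (G + W + 1))
  have huc : ∀ V : ℝ → ℝ → ℝ, ContinuousOn (fun p : ℝ × ℝ => V p.1 p.2) (univ ×ˢ Ico 0 T) →
      ∃ δ > 0, ∀ x1 x2 t, (x1, t) ∈ trapZ R C t1 → (x2, t) ∈ trapZ R C t1 → |x1 - x2| < δ →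
        |V x1 t - V x2 t| < ω := by
    intro V hV
    have := hcm.uniformContinuousOn_of_continuous (hV.mono hsub)
    obtain ⟨δ, hδ, h⟩ := Metric.uniformContinuousOn_iff.1 this ω hω
    refine ⟨δ, hδ, fun x1 x2 t h1 h2 h3 => ?_⟩
    have := h (x1, t) h1 (x2, t) h2 (by simpa [Prod.dist_eq, Real.dist_eq] using h3)
    simpa [Real.dist_eq] using this
  obtain ⟨δ1, hδ1, hu1⟩ := huc sx hsx
  obtain ⟨δ2, hδ2, hu2⟩ := huc cx hcx
  obtain ⟨δ3, hδ3, hu3⟩ := huc w hw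
  obtain ⟨h0, hh0, hh01, hh02, hh03⟩ : ∃ h > 0, h < δ1 ∧ h < δ2 ∧ h < δ3 := by
    refine ⟨min δ1 (min δ2 δ3) / 2, by positivity, ?_, ?_, ?_⟩
    all_goals
      have a1 := min_le_left δ1 (min δ2 δ3)
      have a2 := min_le_right δ1 (min δ2 δ3)
      have a3 := min_le_left δ2 δ3
      have a4 := min_le_right δ2 δ3
      linarith
  let D : Set (ℝ × ℝ × ℝ) := {p | (p.1, p.2.2) ∈ trapZ R C t1 ∧ (p.2.1, p.2.2) ∈ trapZ R C t1 ∧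
    p.1 ≤ p.2.1 ∧ p.2.1 - p.1 ≤ h0 * Real.exp (-K * p.2.2)}
  let F : ℝ × ℝ × ℝ → ℝ := fun p => S p.2.1 p.2.2 - S p.1 p.2.2 -
    (Y + ε * (1 + p.2.2)) * w p.1 p.2.2 * (p.2.1 - p.1)
  have hDc : IsCompact D := by
    have hcl : IsClosed D := by
      have e : D = (fun p : ℝ × ℝ × ℝ => (p.1, p.2.2)) ⁻¹' trapZ R C t1 ∩
        ((fun p : ℝ × ℝ × ℝ => (p.2.1, p.2.2)) ⁻¹' trapZ R C t1 ∩
        ({p | p.1 ≤ p.2.1} ∩ {p | p.2.1 - p.1 ≤ h0 * Real.exp (-K * p.2.2)})) := rfl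
      rw [e]
      refine (hcm.isClosed.preimage (by fun_prop)).inter ((hcm.isClosed.preimage (by fun_prop)).inter
        ((isClosed_le (by fun_prop) (by fun_prop)).inter (isClosed_le (by fun_prop) (by fun_prop))))
    refine (isCompact_Icc (a := ((-R, -R, 0) : ℝ × ℝ × ℝ)) (b := (R, R, t1))).of_isClosed_subset hcl ?_
    rintro ⟨x, x', t⟩ ⟨⟨h0, h1, h2⟩, ⟨_, _, h4⟩, _⟩
    simp only at h0 h1 h2 h4
    have := abs_le.1 h2
    have := abs_le.1 h4
    have h3 : 0 ≤ C * t := mul_nonneg hC h0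
    refine ⟨⟨?_, ?_, h0⟩, ⟨?_, ?_, h1⟩⟩ <;> simp <;> linarith
  have hFc : ContinuousOn F D := by
    have c1 : ContinuousOn (fun p : ℝ × ℝ × ℝ => S p.2.1 p.2.2) D :=
      hS.comp (f := fun p : ℝ × ℝ × ℝ => (p.2.1, p.2.2)) (by fun_prop) (fun p hp => hsub hp.2.1)
    have c2 : ContinuousOn (fun p : ℝ × ℝ × ℝ => S p.1 p.2.2) D :=
      hS.comp (f := fun p : ℝ × ℝ × ℝ => (p.1, p.2.2)) (by fun_prop) (fun p hp => hsub hp.1)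
    have c3 : ContinuousOn (fun p : ℝ × ℝ × ℝ => w p.1 p.2.2) D :=
      hw.comp (f := fun p : ℝ × ℝ × ℝ => (p.1, p.2.2)) (by fun_prop) (fun p hp => hsub hp.1)
    exact (c1.sub c2).sub (((by fun_prop : ContinuousOn (fun p : ℝ × ℝ × ℝ => Y + ε * (1 + p.2.2)) D).mul c3).mul (by fun_prop))
  have hF : ∀ p ∈ D, F p ≤ 0 := by
    by_contra! hcon
    obtain ⟨p0, hp0, hFp0⟩ := hcon
    obtain ⟨⟨x1, x2, t⟩, hP, hmax⟩ := hDc.exists_isMaxOn ⟨p0, hp0⟩ hFc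
    have hFP : 0 < F (x1, x2, t) := hFp0.trans_le (hmax hp0)
    obtain ⟨hP1, hP2, hP3, hP4⟩ := hP
    simp only at hP1 hP2 hP3 hP4
    have htI : t ∈ Ico 0 T := (hsub hP1).2
    have hlt : x1 < x2 := by
      rcases hP3.lt_or_eq with h | h
      · exact h
      · subst h; simp [F] at hFP
    have hgap : x2 - x1 ≤ h0 := by
      refine hP4.trans (mul_le_of_le_one_right hh0.le (Real.exp_le_one_iff.2 ?_))
      have := mul_nonneg hK0 htI.1; linarith
    obtain ⟨ξ, hξ1, hξ2, hξ, hξe⟩ := hmvt S sx hSx x1 x2 t hlt hP1 hP2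
    obtain ⟨ζ, hζ1, hζ2, hζ, hζe⟩ := hmvt c cx hCx x1 x2 t hlt hP1 hP2
    have hsξ : |sx x1 t - sx ξ t| < ω := hu1 _ _ _ hP1 hξ (by rw [abs_lt]; constructor <;> linarith)
    have hwξ : |w x1 t - w ξ t| < ω := hu3 _ _ _ hP1 hξ (by rw [abs_lt]; constructor <;> linarith)
    have hcζ : |cx x1 t - cx ζ t| < ω := hu2 _ _ _ hP1 hζ (by rw [abs_lt]; constructor <;> linarith)
    rw [abs_lt] at hsξ hwξ hcζ
    have hw1 := hwmin _ _ hP1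
    have hwW : w x1 t ≤ W := (le_abs_self _).trans (hW _ hP1)
    have hgG : g x1 t ≤ G := (le_abs_self _).trans (hG _ hP1)
    have hg1 := hg0 x1 t htI
    have hw1p := hw0 x1 t htI
    have hmt0 : 0 ≤ Y + ε * (1 + t) := by have := htI.1; positivity
    have hmM : Y + ε * (1 + t) ≤ M := by
      have := hP1.2.1; simp only at this; rw [hM]; gcongr
    have hYM : Y ≤ M := by rw [hM]; have : 0 ≤ ε * (1 + t1) := by positivity
                           linarith
    have hgp : 0 < x2 - x1 := by linarith
    have hsm : (Y + ε * (1 + t)) * w x1 t < sx ξ t := by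
      simp only [F] at hFP
      rw [hξe] at hFP
      have : 0 < (sx ξ t - (Y + ε * (1 + t)) * w x1 t) * (x2 - x1) := by linarith
      have := (pos_iff_pos_of_mul_pos this).2 hgp
      linarith
    have hs1 : -ω < sx x1 t := by
      have : 0 ≤ (Y + ε * (1 + t)) * w x1 t := by positivity
      linarith
    have htpos : 0 < t := by
      rcases htI.1.lt_or_eq with h | h
      · exact h
      · exfalso
        subst h
        have h1 := hinit ξ
        have h2 : Y * w ξ 0 ≤ Y * (w x1 0 + ω) := by gcongr; linarith
        have h3 : Y * ω ≤ M * (G + W + 1) * ω := by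
          have : M * 1 ≤ M * (G + W + 1) := by gcongr; linarith
          gcongr; linarith
        have h4 : ε * w0 ≤ ε * w x1 0 := by gcongr
        linarith
    have htO : t ∈ Ioo 0 T := ⟨htpos, htI.2⟩
    have hck : |c x2 t - c x1 t| ≤ K * (x2 - x1) := by
      rw [hζe, abs_mul, abs_of_pos hgp]; gcongr; exact hK _ hζ
    rw [abs_le] at hck
    have hc1 : |c x1 t| ≤ C := by rw [abs_of_nonneg (hc0 _ _ htI)]; exact hcC _ hP1
    have hc2 : |c x2 t| ≤ C := by rw [abs_of_nonneg (hc0 _ _ htI)]; exact hcC _ hP2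
    have hid : HasDerivAt (fun h : ℝ => h) 1 0 := hasDerivAt_id 0
    have d1 := hSd x2 t htO
    have d2 := hSd x1 t htO
    have d3 := hwd x1 t htO
    have d4 : HasDerivAt (fun h : ℝ => Y + ε * (1 + (t - h))) (-ε) 0 := by
      exact ((((hid.const_sub t).const_add 1).const_mul ε).const_add Y).congr_deriv (by ring)
    have d5 : HasDerivAt (fun h : ℝ => (x2 - h * c x2 t) - (x1 - h * c x1 t)) (-(c x2 t - c x1 t)) 0 := by
      exact (((hid.mul_const (c x2 t)).const_sub x2).sub ((hid.mul_const (c x1 t)).const_sub x1)).congr_deriv (by ring)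
    have d6 := (d1.sub d2).sub ((d4.mul d3).mul d5)
    have hpos : 0 < 1 / (K + 1) := by positivity
    have hd := deriv_nonpos_of_right d6 (lt_min htpos hpos) (by
      intro h hh1 hh2
      have hht := lt_of_lt_of_le hh2 (min_le_left _ _)
      have hhK := lt_of_lt_of_le hh2 (min_le_right _ _)
      have hhK' : h * (K + 1) < 1 := by rwa [lt_div_iff₀ (by positivity)] at hhK
      have hmem : (x1 - h * c x1 t, x2 - h * c x2 t, t - h) ∈ D := by
        refine ⟨trapZ_back hP1 hc1 hh1.le hht.le, trapZ_back hP2 hc2 hh1.le hht.le, ?_, ?_⟩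
        · simp only
          have : h * (c x2 t - c x1 t) ≤ h * (K * (x2 - x1)) := by gcongr; exact hck.2
          have e0 : h * (K + 1) * (x2 - x1) ≤ 1 * (x2 - x1) := by gcongr
          have e1 : 0 < h * (x2 - x1) := mul_pos hh1 hgp
          linarith
        · simp only
          have e1 : h * (-(K * (x2 - x1))) ≤ h * (c x2 t - c x1 t) := by gcongr; exact hck.1
          have e2 : (x2 - x1) * (1 + K * h) ≤ (h0 * Real.exp (-K * t)) * Real.exp (K * h) := by
            gcongr
            linarith [Real.add_one_le_exp (K * h)]
          rw [mul_assoc, ← Real.exp_add] at e2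
          have e3 : -K * t + K * h = -K * (t - h) := by ring
          rw [e3] at e2
          linarith
      have := hmax hmem
      simp only [F, Set.mem_ofPred_eq] at this
      simpa using this)
    simp only [zero_mul, sub_zero, Pi.mul_apply] at hd
    rw [hζe] at hd
    have b1 : -(M * (G * ω)) ≤ (Y + ε * (1 + t)) * (g x1 t * sx x1 t) := by
      have a1 : -(G * ω) ≤ g x1 t * sx x1 t := by
        have : g x1 t * (-ω) ≤ g x1 t * sx x1 t := by gcongr
        have : g x1 t * ω ≤ G * ω := by gcongr
        linarith
      have a2 : (Y + ε * (1 + t)) * (-(G * ω)) ≤ (Y + ε * (1 + t)) * (g x1 t * sx x1 t) := by gcongr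
      have a3 : (Y + ε * (1 + t)) * (G * ω) ≤ M * (G * ω) := by gcongr
      linarith
    have b2 : -(M * (W * ω)) ≤ (Y + ε * (1 + t)) * (w x1 t * (cx ζ t - cx x1 t)) := by
      have a1 : -(W * ω) ≤ w x1 t * (cx ζ t - cx x1 t) := by
        have : w x1 t * (-ω) ≤ w x1 t * (cx ζ t - cx x1 t) := by gcongr; linarith
        have : w x1 t * ω ≤ W * ω := by gcongr
        linarith
      have a2 : (Y + ε * (1 + t)) * (-(W * ω)) ≤ (Y + ε * (1 + t)) * (w x1 t * (cx ζ t - cx x1 t)) := by gcongr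
      have a3 : (Y + ε * (1 + t)) * (W * ω) ≤ M * (W * ω) := by gcongr
      linarith
    have b3 : ε * w0 ≤ ε * w x1 t := by gcongr
    have b4 : 0 < M * ω := by positivity
    have b5 : 0 < ε * w x1 t + (Y + ε * (1 + t)) * (g x1 t * sx x1 t) + (Y + ε * (1 + t)) * (w x1 t * (cx ζ t - cx x1 t)) := by
      linarith
    have b6 := mul_pos b5 hgp
    linarith
  -- conclude
  have hs := (hSx x0 t1 ⟨ht0, ht1⟩).tendsto_slope_zero_right
  refine le_of_tendsto hs ?_
  have hexp : 0 < min (h0 * Real.exp (-K * t1)) (R - C * t1 - |x0|) := lt_min (by positivity) (by linarith)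
  filter_upwards [Ioo_mem_nhdsGT hexp] with h hh
  have e1 := hh.2.trans_le (min_le_left _ _)
  have e2 := hh.2.trans_le (min_le_right _ _)
  have hx1 : |x0 + h| ≤ R - C * t1 := by
    have := abs_add_le x0 h
    rw [abs_of_pos hh.1] at this
    linarith
  have := hF (x0, x0 + h, t1) ⟨⟨ht0, le_rfl, hx0.le⟩, ⟨ht0, le_rfl, hx1⟩, by simp; exact hh.1.le, by simpa using e1.le⟩
  simp only [F, add_sub_cancel_left] at this
  rw [smul_eq_mul, inv_mul_le_iff₀ hh.1]
  linarith

lemma comp_pt (F : ℝ → ℝ) {f : ℝ → ℝ} {d e x : ℝ} (hF : HasDerivAt F d (f x))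
    (hf : HasDerivAt f e x) : HasDerivAt (fun z => F (f z)) (d * e) x := HasDerivAt.comp x hF hf

/-- Regularity package for the p-system. -/
structure GoodSol (K₁ γ T : ℝ) (τ u τx ux : ℝ → ℝ → ℝ) : Prop where
  pos : ∀ x, ∀ t ∈ Ico 0 T, 0 < τ x t
  cτ : ContinuousOn (fun p : ℝ × ℝ => τ p.1 p.2) (univ ×ˢ Ico 0 T)
  cu : ContinuousOn (fun p : ℝ × ℝ => u p.1 p.2) (univ ×ˢ Ico 0 T)
  cτx : ContinuousOn (fun p : ℝ × ℝ => τx p.1 p.2) (univ ×ˢ Ico 0 T)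
  cux : ContinuousOn (fun p : ℝ × ℝ => ux p.1 p.2) (univ ×ˢ Ico 0 T)
  dτ : ∀ x, ∀ t ∈ Ico 0 T, HasDerivAt (fun x' => τ x' t) (τx x t) x
  du : ∀ x, ∀ t ∈ Ico 0 T, HasDerivAt (fun x' => u x' t) (ux x t) x
  lτ : ∀ x, ∀ t ∈ Ioo 0 T, ∀ v : ℝ, HasDerivAt (fun h => τ (x - h * v) (t - h))
    (-(v * τx x t + ux x t)) 0
  lu : ∀ x, ∀ t ∈ Ioo 0 T, ∀ v : ℝ, HasDerivAt (fun h => u (x - h * v) (t - h))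
    (-(v * ux x t + soundP K₁ γ (τ x t) ^ 2 * τx x t)) 0

lemma GoodSol.reflect {K₁ γ T : ℝ} {τ u τx ux : ℝ → ℝ → ℝ} (h : GoodSol K₁ γ T τ u τx ux) :
    GoodSol K₁ γ T (fun x t => τ (-x) t) (fun x t => -u (-x) t) (fun x t => -τx (-x) t)
      (fun x t => ux (-x) t) := by
  have hc : ∀ V : ℝ → ℝ → ℝ, ContinuousOn (fun p : ℝ × ℝ => V p.1 p.2) (univ ×ˢ Ico 0 T) →
      ContinuousOn (fun p : ℝ × ℝ => V (-p.1) p.2) (univ ×ˢ Ico 0 T) := fun V hV =>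
    hV.comp (f := fun p : ℝ × ℝ => (-p.1, p.2)) (by fun_prop) (fun p hp => ⟨trivial, hp.2⟩)
  refine ⟨fun x t ht => h.pos _ t ht, hc _ h.cτ, (hc _ h.cu).neg, (hc _ h.cτx).neg, hc _ h.cux, ?_, ?_, ?_, ?_⟩
  · intro x t ht
    exact ((h.dτ (-x) t ht).comp x (hasDerivAt_neg x)).congr_deriv (by ring)
  · intro x t ht
    exact ((h.du (-x) t ht).comp x (hasDerivAt_neg x)).neg.congr_deriv (by ring)
  · intro x t ht v
    have e : (fun h => τ (-(x - h * v)) (t - h)) = fun h => τ (-x - h * (-v)) (t - h) := by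
      funext h; congr 1; ring
    simp only [e]
    exact (h.lτ (-x) t ht (-v)).congr_deriv (by ring)
  · intro x t ht v
    have e : (fun h => -u (-(x - h * v)) (t - h)) = fun h => -u (-x - h * (-v)) (t - h) := by
      funext h; congr 2; ring
    simp only [e]
    exact (h.lu (-x) t ht (-v)).neg.congr_deriv (by ring)

lemma soundP_pos {K₁ γ a : ℝ} (hK : 0 < K₁) (hγ : 1 < γ) (ha : 0 < a) : 0 < soundP K₁ γ a := by
  unfold soundP; have : 0 < γ := by linarith
  positivity

lemma etaP_pos {K₁ γ a : ℝ} (hK : 0 < K₁) (hγ : 1 < γ) (ha : 0 < a) : 0 < etaP K₁ γ a := by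
  unfold etaP; have : 0 < γ := by linarith
  have : 0 < γ - 1 := by linarith
  positivity

lemma etaP_hasDeriv {K₁ γ a : ℝ} (hγ : 1 < γ) (ha : 0 < a) :
    HasDerivAt (etaP K₁ γ) (-soundP K₁ γ a) a := by
  have h := (Real.hasDerivAt_rpow_const (x := a) (p := -(γ - 1) / 2) (Or.inl ha.ne')).const_mul
    (2 * Real.sqrt (K₁ * γ) / (γ - 1))
  refine h.congr_deriv ?_
  have : γ - 1 ≠ 0 := by linarith
  unfold soundP
  rw [show -(γ - 1) / 2 - 1 = -(γ + 1) / 2 by ring]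
  field_simp

lemma soundP_hasDeriv {K₁ γ a : ℝ} (ha : 0 < a) :
    HasDerivAt (soundP K₁ γ) (-((γ + 1) / 2) * soundP K₁ γ a / a) a := by
  have h := (Real.hasDerivAt_rpow_const (x := a) (p := -(γ + 1) / 2) (Or.inl ha.ne')).const_mul
    (Real.sqrt (K₁ * γ))
  refine h.congr_deriv ?_
  unfold soundP
  rw [Real.rpow_sub_one ha.ne']
  field_simp

lemma soundP_sq {K₁ γ a : ℝ} (hK : 0 < K₁) (hγ : 1 < γ) (ha : 0 < a) :
    soundP K₁ γ a ^ 2 = K₁ * γ * a ^ (-γ - 1) := by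
  unfold soundP
  have : 0 < γ := by linarith
  rw [mul_pow, Real.sq_sqrt (by positivity), ← Real.rpow_natCast, ← Real.rpow_mul ha.le]
  congr 2; push_cast; ring

lemma etaP_anti {K₁ γ a b : ℝ} (hγ : 1 < γ) (ha : 0 < a) (hab : a ≤ b) :
    etaP K₁ γ b ≤ etaP K₁ γ a := by
  unfold etaP
  have : 0 < γ - 1 := by linarith
  have := Real.rpow_le_rpow_of_nonpos ha hab (show -(γ - 1) / 2 ≤ 0 by linarith)
  gcongr

lemma soundP_anti {K₁ γ a b : ℝ} (hγ : 1 < γ) (ha : 0 < a) (hab : a ≤ b) :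
    soundP K₁ γ b ≤ soundP K₁ γ a := by
  unfold soundP
  have := Real.rpow_le_rpow_of_nonpos ha hab (show -(γ + 1) / 2 ≤ 0 by linarith)
  gcongr

lemma soundP_bound {K₁ γ : ℝ} (hK : 0 < K₁) (hγ : 1 < γ) (E : ℝ) :
    ∃ C, 0 ≤ C ∧ ∀ a, 0 < a → etaP K₁ γ a ≤ E → soundP K₁ γ a ≤ C := by
  have hg : 0 < γ := by linarith
  have hg1 : 0 < γ - 1 := by linarith
  have hA : 0 < 2 * Real.sqrt (K₁ * γ) / (γ - 1) := by positivity
  refine ⟨Real.sqrt (K₁ * γ) * |E / (2 * Real.sqrt (K₁ * γ) / (γ - 1))| ^ ((γ + 1) / (γ - 1)), by positivity, ?_⟩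
  intro a ha h
  unfold etaP at h
  have h1 : a ^ (-(γ - 1) / 2) ≤ E / (2 * Real.sqrt (K₁ * γ) / (γ - 1)) := by
    rw [le_div_iff₀ hA]; linarith
  have h2 : a ^ (-(γ + 1) / 2) = (a ^ (-(γ - 1) / 2)) ^ ((γ + 1) / (γ - 1)) := by
    rw [← Real.rpow_mul ha.le]; congr 1; field_simp
  unfold soundP
  rw [h2]
  have h3 := h1.trans (le_abs_self _)
  gcongr

lemma goodY {K₁ γ T M a0 B : ℝ} (hK : 0 < K₁) (hγ : 1 < γ) (hB : 0 < B) {τ u τx ux : ℝ → ℝ → ℝ}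
    (H : GoodSol K₁ γ T τ u τx ux) (hM : ∀ x, |u x 0| ≤ M) (ha0 : 0 < a0) (hτ : ∀ x, a0 ≤ τ x 0)
    {Y : ℝ} (hY : 0 ≤ Y)
    (hinit : ∀ x, ux x 0 - soundP K₁ γ (τ x 0) * τx x 0 ≤ Y * (B * τ x 0 ^ ((γ + 1) / 4))) :
    ∀ x, ∀ t ∈ Ico 0 T,
      ux x t - soundP K₁ γ (τ x t) * τx x t ≤ Y * (B * τ x t ^ ((γ + 1) / 4)) := by
  intro x0 t1 ht1
  obtain ⟨C, hC, hCb⟩ := soundP_bound hK hγ (M + etaP K₁ γ a0 + 1)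
  have cη : ContinuousOn (fun p : ℝ × ℝ => etaP K₁ γ (τ p.1 p.2)) (univ ×ˢ Ico 0 T) := fun p hp =>
    ContinuousAt.comp_continuousWithinAt (g := etaP K₁ γ) (f := fun p : ℝ × ℝ => τ p.1 p.2)
      (etaP_hasDeriv hγ (H.pos p.1 p.2 hp.2)).continuousAt (H.cτ p hp)
  have cc : ContinuousOn (fun p : ℝ × ℝ => soundP K₁ γ (τ p.1 p.2)) (univ ×ˢ Ico 0 T) := fun p hp =>
    ContinuousAt.comp_continuousWithinAt (g := soundP K₁ γ) (f := fun p : ℝ × ℝ => τ p.1 p.2)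
      (soundP_hasDeriv (H.pos p.1 p.2 hp.2)).continuousAt (H.cτ p hp)
  have cr : ∀ e : ℝ, ContinuousOn (fun p : ℝ × ℝ => τ p.1 p.2 ^ e) (univ ×ˢ Ico 0 T) := fun e =>
    H.cτ.rpow_const (fun p hp => Or.inl (H.pos p.1 p.2 hp.2).ne')
  have hSd : ∀ x, ∀ t ∈ Ioo 0 T, HasDerivAt (fun h => u (x - h * soundP K₁ γ (τ x t)) (t - h) +
      etaP K₁ γ (τ (x - h * soundP K₁ γ (τ x t)) (t - h))) 0 0 := by
    intro x t ht
    have hp := H.pos x t ⟨ht.1.le, ht.2⟩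
    have h1 := H.lu x t ht (soundP K₁ γ (τ x t))
    have h2 := H.lτ x t ht (soundP K₁ γ (τ x t))
    have h3 : HasDerivAt (etaP K₁ γ) (-soundP K₁ γ (τ x t)) (τ (x - 0 * soundP K₁ γ (τ x t)) (t - 0)) := by
      simpa using etaP_hasDeriv hγ hp
    have h4 := h1.add (comp_pt (etaP K₁ γ) h3 h2)
    exact h4.congr_deriv (by ring)
  have hNd : ∀ x, ∀ t ∈ Ioo 0 T, HasDerivAt (fun h => -u (x - h * (-soundP K₁ γ (τ x t))) (t - h) +
      etaP K₁ γ (τ (x - h * (-soundP K₁ γ (τ x t))) (t - h))) 0 0 := by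
    intro x t ht
    have hp := H.pos x t ⟨ht.1.le, ht.2⟩
    have h1 := H.lu x t ht (-soundP K₁ γ (τ x t))
    have h2 := H.lτ x t ht (-soundP K₁ γ (τ x t))
    have h3 : HasDerivAt (etaP K₁ γ) (-soundP K₁ γ (τ x t)) (τ (x - 0 * (-soundP K₁ γ (τ x t))) (t - 0)) := by
      simpa using etaP_hasDeriv hγ hp
    have h4 := h1.neg.add (comp_pt (etaP K₁ γ) h3 h2)
    exact h4.congr_deriv (by ring)
  have hcC := coreA (T := T) (t1 := t1) (R := |x0| + C * t1 + 1) (C := C) (a := M + etaP K₁ γ a0) (b := M + etaP K₁ γ a0)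
    (S := fun x t => u x t + etaP K₁ γ (τ x t)) (N := fun x t => -u x t + etaP K₁ γ (τ x t))
    (c := fun x t => soundP K₁ γ (τ x t)) ht1.2 hC (H.cu.add cη) (H.cu.neg.add cη)
    (fun x t ht => (soundP_pos hK hγ (H.pos x t ht)).le)
    (fun x t ht h => hCb _ (H.pos x t ht) (by linarith))
    (fun x => add_le_add ((le_abs_self _).trans (hM x)) (etaP_anti hγ ha0 (hτ x)))
    (fun x => add_le_add ((neg_le_abs _).trans (hM x)) (etaP_anti hγ ha0 (hτ x))) hSd hNd
  refine coreB (T := T) (t1 := t1) (R := |x0| + C * t1 + 1) (C := C) (Y := Y)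
    (S := fun x t => u x t + etaP K₁ γ (τ x t)) (c := fun x t => soundP K₁ γ (τ x t))
    (w := fun x t => B * τ x t ^ ((γ + 1) / 4))
    (sx := fun x t => ux x t - soundP K₁ γ (τ x t) * τx x t)
    (cx := fun x t => -((γ + 1) / 2) * soundP K₁ γ (τ x t) / τ x t * τx x t)
    (g := fun x t => B * ((γ + 1) / 4 * τ x t ^ ((γ + 1) / 4 - 1)))
    ht1.2 hC hY (H.cu.add cη) (continuousOn_const.mul (cr _)) (H.cux.sub (cc.mul H.cτx))
    (((continuousOn_const.mul cc).div H.cτ (fun p hp => (H.pos p.1 p.2 hp.2).ne')).mul H.cτx)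
    (continuousOn_const.mul (continuousOn_const.mul (cr _)))
    (fun x t ht => (soundP_pos hK hγ (H.pos x t ht)).le) ?_ ?_ hcC ?_ ?_ hSd ?_ hinit x0 ht1.1 (by linarith)
  · intro x t ht
    have := H.pos x t ht
    have : 0 < γ := by linarith
    positivity
  · intro x t ht
    have := H.pos x t ht
    positivity
  · intro x t ht
    have h4 := (H.du x t ht).add (comp_pt (etaP K₁ γ) (etaP_hasDeriv hγ (H.pos x t ht)) (H.dτ x t ht))
    exact h4.congr_deriv (by ring)
  · intro x t ht
    exact comp_pt (soundP K₁ γ) (soundP_hasDeriv (H.pos x t ht)) (H.dτ x t ht)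
  · intro x t ht
    have hp := H.pos x t ⟨ht.1.le, ht.2⟩
    have h2 := H.lτ x t ht (soundP K₁ γ (τ x t))
    have h3 : HasDerivAt (fun a : ℝ => a ^ ((γ + 1) / 4)) ((γ + 1) / 4 * τ x t ^ ((γ + 1) / 4 - 1)) (τ (x - 0 * soundP K₁ γ (τ x t)) (t - 0)) := by
      simpa using Real.hasDerivAt_rpow_const (x := τ x t) (p := (γ + 1) / 4) (Or.inl hp.ne')
    refine ((h3.comp (0:ℝ) h2).const_mul B).congr_deriv ?_
    rw [Real.rpow_sub_one hp.ne']
    field_simp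
    ring

lemma etaP_weight {K₁ γ a : ℝ} (hK : 0 < K₁) (hγ : 1 < γ) (ha : 0 < a) :
    etaP K₁ γ a ^ ((γ + 1) / (2 * (γ - 1))) *
      (((2 * Real.sqrt (K₁ * γ) / (γ - 1)) ^ ((γ + 1) / (2 * (γ - 1))))⁻¹ * a ^ ((γ + 1) / 4)) = 1 := by
  have hg : 0 < γ := by linarith
  have hg1 : 0 < γ - 1 := by linarith
  have hA : 0 < 2 * Real.sqrt (K₁ * γ) / (γ - 1) := by positivity
  unfold etaP
  rw [Real.mul_rpow hA.le (by positivity), ← Real.rpow_mul ha.le]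
  have e : -(γ - 1) / 2 * ((γ + 1) / (2 * (γ - 1))) = -((γ + 1) / 4) := by field_simp; norm_num
  rw [e, Real.rpow_neg ha.le]
  have h1 : 0 < (2 * Real.sqrt (K₁ * γ) / (γ - 1)) ^ ((γ + 1) / (2 * (γ - 1))) := by positivity
  have h2 : 0 < a ^ ((γ + 1) / 4) := by positivity
  generalize (2 * Real.sqrt (K₁ * γ) / (γ - 1)) ^ ((γ + 1) / (2 * (γ - 1))) = P at *
  generalize a ^ ((γ + 1) / 4) = Q at *
  field_simp

lemma goodY' {K₁ γ T M a0 : ℝ} (hK : 0 < K₁) (hγ : 1 < γ) (hT : 0 < T) {τ u τx ux : ℝ → ℝ → ℝ}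
    (H : GoodSol K₁ γ T τ u τx ux) (hM : ∀ x, |u x 0| ≤ M) (ha0 : 0 < a0) (hτ : ∀ x, a0 ≤ τ x 0)
    (hux : ∀ x, |ux x 0| ≤ M) (hτx : ∀ x, |τx x 0| ≤ M) (y : ℝ → ℝ → ℝ)
    (hy : ∀ x, ∀ t ∈ Ico 0 T, y x t = etaP K₁ γ (τ x t) ^ ((γ + 1) / (2 * (γ - 1))) *
      (ux x t - soundP K₁ γ (τ x t) * τx x t)) :
    ∀ x, ∀ t ∈ Ico 0 T, y x t ≤ max 0 (⨆ x', y x' 0) := by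
  have h0 : (0:ℝ) ∈ Ico 0 T := ⟨le_rfl, hT⟩
  have hg : 0 < γ := by linarith
  have hg1 : 0 < γ - 1 := by linarith
  set B := ((2 * Real.sqrt (K₁ * γ) / (γ - 1)) ^ ((γ + 1) / (2 * (γ - 1))))⁻¹ with hB
  have hBpos : 0 < B := by positivity
  have hM0 : 0 ≤ M := (abs_nonneg _).trans (hM 0)
  have hbdd : BddAbove (range fun x' => y x' 0) := by
    refine ⟨etaP K₁ γ a0 ^ ((γ + 1) / (2 * (γ - 1))) * (M + soundP K₁ γ a0 * M), ?_⟩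
    rintro _ ⟨x, rfl⟩
    have hp := H.pos x 0 h0
    have e1 := etaP_pos hK hγ hp
    have e2 := etaP_anti (K₁ := K₁) hγ ha0 (hτ x)
    have e3 := soundP_anti (K₁ := K₁) hγ ha0 (hτ x)
    have e4 := soundP_pos hK hγ hp
    have e5 := soundP_pos hK hγ ha0
    have e6 := etaP_pos hK hγ ha0
    simp only
    rw [hy x 0 h0]
    have e7 : ux x 0 - soundP K₁ γ (τ x 0) * τx x 0 ≤ M + soundP K₁ γ a0 * M := by
      have i1 := (le_abs_self _).trans (hux x)
      have i2 : soundP K₁ γ (τ x 0) * (-τx x 0) ≤ soundP K₁ γ a0 * M :=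
        (mul_le_mul_of_nonneg_left ((neg_le_abs _).trans (hτx x)) e4.le).trans (by gcongr)
      linarith
    have e8 : etaP K₁ γ (τ x 0) ^ ((γ + 1) / (2 * (γ - 1))) ≤ etaP K₁ γ a0 ^ ((γ + 1) / (2 * (γ - 1))) :=
      Real.rpow_le_rpow e1.le e2 (by positivity)
    exact (mul_le_mul_of_nonneg_left e7 (by positivity)).trans (mul_le_mul_of_nonneg_right e8 (by positivity))
  have conv : ∀ x, ∀ t ∈ Ico 0 T, ∀ Y : ℝ, y x t ≤ Y ↔
      ux x t - soundP K₁ γ (τ x t) * τx x t ≤ Y * (B * τ x t ^ ((γ + 1) / 4)) := by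
    intro x t ht Y
    have hp := H.pos x t ht
    have hw := etaP_weight hK hγ hp
    rw [← hB] at hw
    have hwp : 0 < B * τ x t ^ ((γ + 1) / 4) := by positivity
    rw [hy x t ht, eq_inv_of_mul_eq_one_left hw, inv_mul_le_iff₀ hwp, mul_comm Y]
  intro x t ht
  rw [conv x t ht]
  refine goodY hK hγ hBpos H hM ha0 hτ (le_max_left _ _) (fun x => ?_) x t ht
  rw [← conv x 0 h0]
  exact (le_ciSup hbdd x).trans (le_max_right _ _)

lemma goodSol_of {K₁ γ T : ℝ} (hK : 0 < K₁) (hγ : 1 < γ) {τ u : ℝ → ℝ → ℝ}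
    (h : PSysSol K₁ γ (Ico 0 T) 1 τ u) :
    GoodSol K₁ γ T τ u (fun x t => deriv (fun x' => τ x' t) x) (fun x t => deriv (fun x' => u x' t) x) := by
  obtain ⟨hpos, hτ, hu, e1, e2⟩ := h
  have hU : UniqueDiffOn ℝ ((univ : Set ℝ) ×ˢ Ico 0 T) := uniqueDiffOn_univ.prod (uniqueDiffOn_Ico 0 T)
  have hdx : ∀ V : ℝ → ℝ → ℝ, ContDiffOn ℝ 1 (fun p : ℝ × ℝ => V p.1 p.2) (univ ×ˢ Ico 0 T) →
      ∀ x, ∀ t ∈ Ico 0 T, HasDerivAt (fun x' => V x' t)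
        (fderivWithin ℝ (fun p : ℝ × ℝ => V p.1 p.2) (univ ×ˢ Ico 0 T) (x, t) (1, 0)) x := by
    intro V hV x t ht
    have h1 := ((hV.differentiableOn one_ne_zero) (x, t) ⟨trivial, ht⟩).hasFDerivWithinAt
    have h2 : HasDerivWithinAt (fun x' : ℝ => (x', t)) ((1, 0) : ℝ × ℝ) univ x :=
      ((hasDerivAt_id x).prodMk (hasDerivAt_const x t)).hasDerivWithinAt
    have h3 := h1.comp_hasDerivWithinAt x h2 (fun x' _ => Set.mk_mem_prod trivial ht)
    exact hasDerivWithinAt_univ.1 h3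
  have hcx : ∀ V : ℝ → ℝ → ℝ, ContDiffOn ℝ 1 (fun p : ℝ × ℝ => V p.1 p.2) (univ ×ˢ Ico 0 T) →
      ContinuousOn (fun p : ℝ × ℝ => deriv (fun x' => V x' p.2) p.1) (univ ×ˢ Ico 0 T) := by
    intro V hV
    have h1 := (hV.continuousOn_fderivWithin hU le_rfl).clm_apply (continuousOn_const (c := ((1, 0) : ℝ × ℝ)))
    exact h1.congr (fun p hp => (hdx V hV p.1 p.2 hp.2).deriv)
  have hline : ∀ V : ℝ → ℝ → ℝ, ContDiffOn ℝ 1 (fun p : ℝ × ℝ => V p.1 p.2) (univ ×ˢ Ico 0 T) →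
      ∀ x, ∀ t ∈ Ioo 0 T, ∀ v : ℝ, HasDerivAt (fun h => V (x - h * v) (t - h))
        (-(v * deriv (fun x' => V x' t) x + deriv (fun t' => V x t') t)) 0 := by
    intro V hV x t ht v
    have hn : (univ : Set ℝ) ×ˢ Ico 0 T ∈ nhds (x, t) := prod_mem_nhds univ_mem (Ico_mem_nhds ht.1 ht.2)
    have h1 := ((hV.differentiableOn one_ne_zero).differentiableAt hn).hasFDerivAt
    set L := fderiv ℝ (fun p : ℝ × ℝ => V p.1 p.2) (x, t) with hL
    have hx : HasDerivAt (fun x' => V x' t) (L (1, 0)) x :=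
      h1.comp_hasDerivAt (f := fun x' : ℝ => (x', t)) x ((hasDerivAt_id x).prodMk (hasDerivAt_const x t))
    have htt : HasDerivAt (fun t' => V x t') (L (0, 1)) t :=
      h1.comp_hasDerivAt (f := fun t' : ℝ => (x, t')) t ((hasDerivAt_const t x).prodMk (hasDerivAt_id t))
    have hg : HasDerivAt (fun h : ℝ => (x - h * v, t - h)) ((-(1 * v), -1) : ℝ × ℝ) 0 :=
      (((hasDerivAt_id (0:ℝ)).mul_const v).const_sub x).prodMk ((hasDerivAt_id (0:ℝ)).const_sub t)
    have h1' : HasFDerivAt (fun p : ℝ × ℝ => V p.1 p.2) L (x - 0 * v, t - 0) := by simpa using h1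
    rw [hx.deriv, htt.deriv]
    refine (h1'.comp_hasDerivAt (f := fun h : ℝ => (x - h * v, t - h)) 0 hg).congr_deriv ?_
    have : ((-(1 * v), -1) : ℝ × ℝ) = (-v) • (1, 0) + (-1 : ℝ) • (0, 1) := by ext <;> simp
    rw [this, map_add, map_smul, map_smul]
    simp; ring
  have hτ' : ContDiffOn ℝ 1 (fun p : ℝ × ℝ => τ p.1 p.2) (univ ×ˢ Ico 0 T) := by exact_mod_cast hτ
  have hu' : ContDiffOn ℝ 1 (fun p : ℝ × ℝ => u p.1 p.2) (univ ×ˢ Ico 0 T) := by exact_mod_cast hu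
  refine ⟨fun x t ht => hpos x t ht, hτ'.continuousOn, hu'.continuousOn, hcx τ hτ', hcx u hu',
    fun x t ht => (hdx τ hτ' x t ht).differentiableAt.hasDerivAt,
    fun x t ht => (hdx u hu' x t ht).differentiableAt.hasDerivAt, ?_, ?_⟩
  · intro x t ht v
    refine (hline τ hτ' x t ht v).congr_deriv ?_
    have := e1 x t ⟨ht.1.le, ht.2⟩
    linarith
  · intro x t ht v
    have htI : t ∈ Ico 0 T := ⟨ht.1.le, ht.2⟩
    refine (hline u hu' x t ht v).congr_deriv ?_
    have h1 := e2 x t htI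
    have hp := hpos x t htI
    have h2 : HasDerivAt (fun x' => K₁ * τ x' t ^ (-γ)) (K₁ * (-γ * τ x t ^ (-γ - 1) * deriv (fun x' => τ x' t) x)) x :=
      (comp_pt (fun a => a ^ (-γ)) (f := fun x' => τ x' t) (x := x) (Real.hasDerivAt_rpow_const (Or.inl hp.ne'))
        ((hdx τ hτ' x t htI).differentiableAt.hasDerivAt)).const_mul K₁
    rw [h2.deriv] at h1
    rw [soundP_sq hK hγ hp]
    linarith

/-- Lemma 2.3: for `γ > 1` and initial data satisfying Assumption A, every `C¹` solution
of the p-system on `ℝ × [0,T)` satisfies `y(x,t) ≤ Y` and `q(x,t) ≤ Q`, where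
`Y = max{0, sup_x y(x,0)}` and `Q = max{0, sup_x q(x,0)}`. -/
theorem psystem_gradient_upper_bound
    (K₁ γ T M₁ M₂ : ℝ) (hK₁ : 0 < K₁) (hγ : 1 < γ) (hT : 0 < T)
    (τ₀ u₀ : ℝ → ℝ) (hA : AssumptionA M₁ M₂ τ₀ u₀)
    (τ u : ℝ → ℝ → ℝ) (hsol : PSysSol K₁ γ (Set.Ico 0 T) 1 τ u)
    (hτ0 : ∀ x, τ x 0 = τ₀ x) (hu0 : ∀ x, u x 0 = u₀ x)
    (y q : ℝ → ℝ → ℝ)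
    (hy : ∀ x t, y x t = etaP K₁ γ (τ x t) ^ ((γ + 1) / (2 * (γ - 1)))
        * deriv (fun x' => u x' t + etaP K₁ γ (τ x' t)) x)
    (hq : ∀ x t, q x t = etaP K₁ γ (τ x t) ^ ((γ + 1) / (2 * (γ - 1)))
        * deriv (fun x' => u x' t - etaP K₁ γ (τ x' t)) x) :
    ∀ x : ℝ, ∀ t ∈ Set.Ico 0 T,
      y x t ≤ max 0 (⨆ x', y x' 0) ∧ q x t ≤ max 0 (⨆ x', q x' 0) := by
  obtain ⟨-, -, hM1, hM2, hbd, hlow⟩ := hA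
  have H := goodSol_of hK₁ hγ hsol
  have eτ : (fun x => τ x 0) = τ₀ := funext hτ0
  have eu : (fun x => u x 0) = u₀ := funext hu0
  have b1 : ∀ x, |u x 0| ≤ M₁ := fun x => by
    rw [hu0]; linarith [hbd x, abs_nonneg (τ₀ x), abs_nonneg (deriv τ₀ x), abs_nonneg (deriv u₀ x)]
  have b2 : ∀ x, M₂ ≤ τ x 0 := fun x => by rw [hτ0]; exact hlow x
  have b3 : ∀ x, |deriv (fun x' => u x' 0) x| ≤ M₁ := fun x => by
    rw [eu]; linarith [hbd x, abs_nonneg (τ₀ x), abs_nonneg (deriv τ₀ x), abs_nonneg (u₀ x)]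
  have b4 : ∀ x, |deriv (fun x' => τ x' 0) x| ≤ M₁ := fun x => by
    rw [eτ]; linarith [hbd x, abs_nonneg (τ₀ x), abs_nonneg (u₀ x), abs_nonneg (deriv u₀ x)]
  have hη : ∀ x, ∀ t ∈ Ico 0 T, HasDerivAt (fun x' => etaP K₁ γ (τ x' t))
      (-soundP K₁ γ (τ x t) * deriv (fun x' => τ x' t) x) x := fun x t ht =>
    comp_pt (etaP K₁ γ) (etaP_hasDeriv hγ (H.pos x t ht)) (H.dτ x t ht)
  intro x t ht
  constructor
  · refine goodY' hK₁ hγ hT H b1 hM2 b2 b3 b4 y ?_ x t ht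
    intro x t ht
    have hd : deriv (fun x' => u x' t + etaP K₁ γ (τ x' t)) x = _ :=
      ((H.du x t ht).add (hη x t ht)).deriv
    rw [hy, hd]
    ring
  · have h1 := goodY' hK₁ hγ hT H.reflect (fun x => by simpa using b1 (-x)) hM2 (fun x => b2 (-x))
      (fun x => b3 (-x)) (fun x => by simpa using b4 (-x)) (fun x t => q (-x) t) ?_ (-x) t ht
    · simp only [neg_neg] at h1
      have e : (⨆ x', q (-x') 0) = ⨆ x', q x' 0 :=
        (Equiv.neg ℝ).iSup_comp (g := fun x' => q x' 0)
      rwa [e] at h1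
    · intro x t ht
      have hd : deriv (fun x' => u x' t - etaP K₁ γ (τ x' t)) (-x) = _ :=
        ((H.du (-x) t ht).sub (hη (-x) t ht)).deriv
      rw [hq, hd]
      ring
end
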